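/- Let n ≥ 2 be fixed and let (X_d)_{d≥1} be a unitarily invariant sequence of random positive semidefinite matrices X_d ∈ M_n(ℂ) ⊗ M_d(ℂ) converging strongly to a compactly supported probability measure μ with supp(μ) ⊆ [A,B] ⊆ [0,∞), mean m and variance σ². If A > (n²−2)(B−m) + 2σ√(n²−2), then almost surely, for all sufficiently large d, X_d ∈ SEP_{n,d}; in particular lim_{d→∞} P(X_d ∈ SEP_{n,d}) = 1. -/

import Mathlib

open MeasureTheory Filter Topology Polynomial Matrix Kronecker
open scoped ComplexOrder

noncomputable section

/-- Measurable space structure on matrices (entrywise). -/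
instance matMS (m n : Type*) : MeasurableSpace (Matrix m n ℂ) :=
  inferInstanceAs (MeasurableSpace (m → n → ℂ))

/-- The ℓ²→ℓ² operator norm of a complex square matrix. -/
def opNorm {N : Type*} [Fintype N] [DecidableEq N] (X : Matrix N N ℂ) : ℝ :=
  ‖Matrix.toEuclideanCLM (𝕜 := ℂ) (n := N) X‖

/-- Application of a real polynomial to a complex square matrix. -/
def polyApply {N : Type*} [Fintype N] [DecidableEq N] (P : Polynomial ℝ)
    (X : Matrix N N ℂ) : Matrix N N ℂ :=
  Polynomial.aeval X (P.map (algebraMap ℝ ℂ))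

/-- The (topological) support of a measure on ℝ: points all of whose open
neighbourhoods have positive measure. -/
def msupport (μ : Measure ℝ) : Set ℝ :=
  {x | ∀ U : Set ℝ, IsOpen U → x ∈ U → 0 < μ U}

/-- Strong convergence of a sequence of random matrices `X d ∈ M_n(ℂ) ⊗ M_d(ℂ)`
towards a compactly supported probability measure `μ`: almost surely, for every
real polynomial `P`, the normalized traces of `P(X d)` converge to `∫ P dμ` and the
operator norms of `P(X d)` converge to `sup {|P(x)| : x ∈ supp μ}`. -/
def StrongConv {Ω : Type*} [MeasurableSpace Ω] (ℙ : Measure Ω) (n : ℕ)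
    (X : (d : ℕ) → Ω → Matrix (Fin n × Fin d) (Fin n × Fin d) ℂ)
    (μ : Measure ℝ) : Prop :=
  ∀ᵐ ω ∂ℙ, ∀ P : Polynomial ℝ,
    Tendsto (fun d : ℕ => ((n : ℂ) * (d : ℂ))⁻¹ * (polyApply P (X d ω)).trace) atTop
      (𝓝 ((∫ x, P.eval x ∂μ : ℝ) : ℂ)) ∧
    Tendsto (fun d : ℕ => opNorm (polyApply P (X d ω))) atTop
      (𝓝 (sSup ((fun x => |P.eval x|) '' msupport μ)))

/-- Unitary invariance of a sequence of random matrices: for every `d` and every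
unitary `U`, the random matrix `U (X d) U*` has the same distribution as `X d`. -/
def UnitInv {Ω : Type*} [MeasurableSpace Ω] (ℙ : Measure Ω) (n : ℕ)
    (X : (d : ℕ) → Ω → Matrix (Fin n × Fin d) (Fin n × Fin d) ℂ) : Prop :=
  ∀ d : ℕ, ∀ U : Matrix (Fin n × Fin d) (Fin n × Fin d) ℂ,
    U ∈ unitary (Matrix (Fin n × Fin d) (Fin n × Fin d) ℂ) →
    Measure.map (fun ω => U * X d ω * star U) ℙ = Measure.map (X d) ℙ

/-- The separable cone `SEP_{n,d}`. -/
def SEP (n d : ℕ) : Set (Matrix (Fin n × Fin d) (Fin n × Fin d) ℂ) :=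
  {X | ∃ (k : ℕ) (A : Fin k → Matrix (Fin n) (Fin n) ℂ)
      (B : Fin k → Matrix (Fin d) (Fin d) ℂ),
    (∀ i, (A i).PosSemidef) ∧ (∀ i, (B i).PosSemidef) ∧ X = ∑ i, A i ⊗ₖ B i}

/-- The partial transpose on `M_n(ℂ) ⊗ M_d(ℂ)`: transposition of the first factor. -/
def ptrans {n d : ℕ} (X : Matrix (Fin n × Fin d) (Fin n × Fin d) ℂ) :
    Matrix (Fin n × Fin d) (Fin n × Fin d) ℂ :=
  fun p q => X (q.1, p.2) (p.1, q.2)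

/-- The PPT cone `PPT_{n,d}`: positive semidefinite matrices with positive
semidefinite partial transpose. -/
def PPT (n d : ℕ) : Set (Matrix (Fin n × Fin d) (Fin n × Fin d) ℂ) :=
  {X | X.PosSemidef ∧ (ptrans X).PosSemidef}

section Derivations

set_option linter.unusedSectionVars false

variable {J R 𝔓 : Type*} [Fintype J] [DecidableEq J] [Fintype R] [CommRing 𝔓] [Algebra ℂ 𝔓]

/-- A family of derivations `D i j` on a commutative algebra satisfying the commutation relations
of (the opposite of) `gl J`, skew-adjoint for the sesquilinear form `E (κ p * q)`, with the
identity matrix acting trivially. -/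
structure GLAction (κ : 𝔓 →+* 𝔓) (E : 𝔓 →ₗ[ℂ] ℂ) (D : J → J → Derivation ℂ 𝔓 𝔓) : Prop where
  adj : ∀ i j p q, E (κ (D i j p) * q) = E (κ p * D j i q)
  comm : ∀ i j l k p, D i j (D l k p) =
    D l k (D i j p) - (if j = l then D i k p else 0) + (if i = k then D l j p else 0)
  trace : ∀ p, ∑ i, D i i p = 0
  conj_smul : ∀ (a : ℂ) (p : 𝔓), κ (a • p) = star a • κ p

/-- Hermitian matrices on which the derivations act by commutators with matrix units and which
generate trivial directions. -/
structure Equivariant (κ : 𝔓 →+* 𝔓) (D : J → J → Derivation ℂ 𝔓 𝔓) (c : Matrix J J 𝔓) :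
    Prop where
  deriv : ∀ i j p q, D i j (c p q) = (if i = p then c j q else 0) - (if j = q then c p i else 0)
  central : ∀ p, ∑ i, ∑ k, c i k * D i k p = 0
  herm : ∀ i k, κ (c i k) = c k i

/-- The sesquilinear pairing of rectangular arrays. -/
def pairing (κ : 𝔓 →+* 𝔓) (E : 𝔓 →ₗ[ℂ] ℂ) (G F : Matrix J R 𝔓) : ℂ :=
  ∑ r, ∑ j, E (κ (G j r) * F j r)

/-- The operator `F ↦ (∑ i, D i j F_i)_j`. -/
def divOp (D : J → J → Derivation ℂ 𝔓 𝔓) (F : Matrix J R 𝔓) : Matrix J R 𝔓 :=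
  Matrix.of fun j r => ∑ i, D i j (F i r)

/-- The operator `F ↦ (∑ i k, c i k * D i j F_k)_j`. -/
def twistOp (D : J → J → Derivation ℂ 𝔓 𝔓) (c : Matrix J J 𝔓) (F : Matrix J R 𝔓) :
    Matrix J R 𝔓 :=
  Matrix.of fun j r => ∑ i, ∑ k, c i k * D i j (F k r)

/-- The remainder form controlling the failure of `divOp` to be a projection. -/
def resid (κ : 𝔓 →+* 𝔓) (E : 𝔓 →ₗ[ℂ] ℂ) (D : J → J → Derivation ℂ 𝔓 𝔓) (c : Matrix J J 𝔓)
    (G F : Matrix J R 𝔓) : ℂ :=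
  ∑ r, ∑ j, ∑ l, ∑ i, ∑ k, E (κ (c k i * D k l (G j r)) * D i j (F l r))

variable {κ : 𝔓 →+* 𝔓} {E : 𝔓 →ₗ[ℂ] ℂ} {D : J → J → Derivation ℂ 𝔓 𝔓} {c : Matrix J J 𝔓}

lemma pairing_add_right (G F F' : Matrix J R 𝔓) :
    pairing κ E G (F + F') = pairing κ E G F + pairing κ E G F' := by
  simp [pairing, mul_add, Finset.sum_add_distrib]

lemma pairing_sub_right (G F F' : Matrix J R 𝔓) :
    pairing κ E G (F - F') = pairing κ E G F - pairing κ E G F' := by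
  simp [pairing, mul_sub, Finset.sum_sub_distrib]

lemma pairing_sub_left (G G' F : Matrix J R 𝔓) :
    pairing κ E (G - G') F = pairing κ E G F - pairing κ E G' F := by
  simp [pairing, sub_mul, Finset.sum_sub_distrib]

lemma pairing_smul_right (a : ℂ) (G F : Matrix J R 𝔓) :
    pairing κ E G (a • F) = a * pairing κ E G F := by
  simp [pairing, Finset.mul_sum]

lemma pairing_smul_left (h : GLAction κ E D) (a : ℂ) (G F : Matrix J R 𝔓) :
    pairing κ E (a • G) F = star a * pairing κ E G F := by
  simp [pairing, Finset.mul_sum, h.conj_smul]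

lemma pairing_divOp (h : GLAction κ E D) (G F : Matrix J R 𝔓) :
    pairing κ E G (divOp D F) = pairing κ E (divOp D G) F := by
  simp only [pairing, divOp, Matrix.of_apply, map_sum, Finset.mul_sum, Finset.sum_mul]
  refine Finset.sum_congr rfl fun r _ => ?_
  rw [Finset.sum_comm]
  refine Finset.sum_congr rfl fun i _ => Finset.sum_congr rfl fun j _ => ?_
  rw [h.adj]

lemma twistOp_smul (a : ℂ) (F : Matrix J R 𝔓) :
    twistOp D c (a • F) = a • twistOp D c F := by
  ext j r
  simp [twistOp, Finset.smul_sum]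

lemma twistOp_sub (F G : Matrix J R 𝔓) :
    twistOp D c (F - G) = twistOp D c F - twistOp D c G := by
  ext j r
  simp [twistOp, Finset.sum_sub_distrib, mul_sub]

lemma twistOp_one (F : Matrix J R 𝔓) : twistOp D 1 F = divOp D F := by
  ext j r
  simp [twistOp, divOp, Matrix.one_apply]

lemma equivariant_one (h : GLAction κ E D) : Equivariant κ D (1 : Matrix J J 𝔓) where
  deriv i j p q := by
    have : D i j ((1 : Matrix J J 𝔓) p q) = 0 := by
      by_cases hpq : p = q <;> simp [Matrix.one_apply, hpq]
    rw [this]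
    simp only [Matrix.one_apply]
    by_cases h1 : i = p <;> by_cases h2 : j = q
    · subst h1; subst h2; simp
    · subst h1; simp [h2]
    · subst h2; simp [h1, Ne.symm h1]
    · simp [h1, h2]
  central p := by simpa [Matrix.one_apply] using h.trace p
  herm i k := by
    by_cases hik : i = k
    · subst hik; simp
    · simp [hik, Ne.symm hik]

lemma divOp_mul (hc : Equivariant κ D c) (F : Matrix J R 𝔓) :
    divOp D (c * F) = (Fintype.card J : 𝔓) • (c * F) - c.trace • F + twistOp D c F := by
  ext j r
  have h1 : ∀ i, D i j ((c * F) i r) =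
      ∑ k, (c j k * F k r - (if j = k then c i i * F k r else 0) + c i k * D i j (F k r)) := by
    intro i
    rw [Matrix.mul_apply, map_sum]
    refine Finset.sum_congr rfl fun k _ => ?_
    rw [Derivation.leibniz, hc.deriv, if_pos rfl]
    split_ifs <;> simp <;> ring
  simp only [divOp, Matrix.of_apply, h1, Matrix.add_apply, Matrix.sub_apply, Matrix.smul_apply,
    twistOp, Finset.sum_add_distrib, Finset.sum_sub_distrib]
  simp [Matrix.mul_apply, Matrix.trace, Finset.sum_mul]

/-- The quasi-projection identity. -/
lemma pairing_twistOp_divOp (h : GLAction κ E D) (hc : Equivariant κ D c) (G F : Matrix J R 𝔓) :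
    pairing κ E G (twistOp D c (divOp D F)) =
      Fintype.card J * pairing κ E G (twistOp D c F) + resid κ E D c G F := by
  simp only [pairing, resid, Finset.mul_sum, ← Finset.sum_add_distrib]
  refine Finset.sum_congr rfl fun r _ => Finset.sum_congr rfl fun j _ => ?_
  have htr : κ c.trace = c.trace := by
    simp [Matrix.trace, hc.herm]
  have e1 : twistOp D c (divOp D F) j r =
      ∑ l, ∑ i, ∑ k, c i k * D l k (D i j (F l r)) + c.trace * ∑ l, D l j (F l r) := by
    have h2 : ∀ i k, c i k * D i j (divOp D F k r) =
        ∑ l, (c i k * D l k (D i j (F l r)) - (if j = l then c i k * D i k (F l r) else 0)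
          + (if i = k then c i k * D l j (F l r) else 0)) := by
      intro i k
      simp only [divOp, Matrix.of_apply, map_sum, Finset.mul_sum]
      refine Finset.sum_congr rfl fun l _ => ?_
      rw [h.comm]
      split_ifs <;> ring
    simp only [twistOp, Matrix.of_apply, h2, Finset.sum_add_distrib, Finset.sum_sub_distrib]
    simp only [Finset.sum_ite_eq, Finset.mem_univ, if_true, hc.central, sub_zero]
    congr 1
    · rw [Finset.sum_congr rfl fun i _ => Finset.sum_comm, Finset.sum_comm]
    · rw [Finset.sum_congr rfl fun i _ => Finset.sum_comm]
      simp [Matrix.trace, Finset.sum_mul, Finset.mul_sum]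
      rw [Finset.sum_comm]
  have e2 : ∀ l i k, E (κ (G j r) * (c i k * D l k (D i j (F l r)))) =
      E (κ (c k i * D k l (G j r)) * D i j (F l r)) +
        E (κ (G j r * D k l (c k i)) * D i j (F l r)) := by
    intro l i k
    rw [← map_add, ← add_mul, ← map_add]
    have : c k i * D k l (G j r) + G j r * D k l (c k i) = D k l (c k i * G j r) := by
      rw [Derivation.leibniz]; simp
    rw [this, h.adj, map_mul κ, hc.herm]
    congr 1; ring
  have e3 : ∀ l i, ∑ k, E (κ (G j r * D k l (c k i)) * D i j (F l r)) =
      Fintype.card J * E (κ (G j r) * (c i l * D i j (F l r)))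
        - (if l = i then E (κ (G j r) * (c.trace * D i j (F l r))) else 0) := by
    intro l i
    rw [← map_sum, ← Finset.sum_mul, ← map_sum, ← Finset.mul_sum]
    have : ∑ k, D k l (c k i) = (Fintype.card J : 𝔓) * c l i - (if l = i then c.trace else 0) := by
      simp only [hc.deriv, if_true, Finset.sum_sub_distrib]
      split_ifs <;> simp [Matrix.trace]
    rw [this, mul_sub, map_sub, sub_mul, map_sub]
    congr 1
    · rw [map_mul κ, map_mul κ, hc.herm, map_natCast κ]
      rw [← smul_eq_mul (Fintype.card J : ℂ), ← map_smul, Algebra.smul_def, map_natCast]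
      congr 1; ring
    · split_ifs
      · rw [map_mul κ, htr]; congr 1; ring
      · simp
  rw [e1, mul_add, map_add]
  simp only [Finset.mul_sum, map_sum, e2, Finset.sum_add_distrib, e3, Finset.sum_sub_distrib]
  simp only [Finset.sum_ite_eq, Finset.mem_univ, if_true, twistOp, Matrix.of_apply,
    Finset.mul_sum, map_sum]
  rw [Finset.sum_comm (f := fun l i => (Fintype.card J : ℂ) * E (κ (G j r) * (c i l * D i j (F l r))))]
  ring

lemma pairing_self_divOp (h : GLAction κ E D) [Nonempty J] (F : Matrix J R 𝔓) :
    pairing κ E ((Fintype.card J : ℂ)⁻¹ • divOp D F) ((Fintype.card J : ℂ)⁻¹ • divOp D F) =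
      pairing κ E F ((Fintype.card J : ℂ)⁻¹ • divOp D F)
        + ((Fintype.card J : ℂ)⁻¹) ^ 2 * resid κ E D 1 F F := by
  have hN : (Fintype.card J : ℂ) ≠ 0 := by simp
  have key := pairing_twistOp_divOp h (equivariant_one h) F F
  rw [twistOp_one, twistOp_one] at key
  have hl : pairing κ E ((Fintype.card J : ℂ)⁻¹ • divOp D F)
      ((Fintype.card J : ℂ)⁻¹ • divOp D F) = ((Fintype.card J : ℂ)⁻¹) ^ 2 *
        pairing κ E F (divOp D (divOp D F)) := by
    rw [pairing_smul_left h, pairing_smul_right, ← pairing_divOp h]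
    simp only [star_inv₀, star_natCast]
    ring
  rw [hl, key, pairing_smul_right]
  field_simp

lemma pairing_complement (h : GLAction κ E D) [Nonempty J] (hc : Equivariant κ D c)
    (htr : c.trace = 0) (F Φ : Matrix J R 𝔓)
    (hΦ : Φ = F - (Fintype.card J : ℂ)⁻¹ • divOp D F) :
    pairing κ E Φ (c * Φ) = ((Fintype.card J : ℂ)⁻¹) ^ 2 * resid κ E D c F F := by
  have hN : (Fintype.card J : ℂ) ≠ 0 := by simp
  have key := pairing_twistOp_divOp h hc F F
  have h1 : pairing κ E Φ (c * Φ) = pairing κ E F (c * Φ) -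
      (Fintype.card J : ℂ)⁻¹ * pairing κ E F (divOp D (c * Φ)) := by
    conv_lhs => rw [hΦ, pairing_sub_left, ← hΦ, pairing_smul_left h, ← pairing_divOp h]
    simp only [star_inv₀, star_natCast]
  have h2 : (Fintype.card J : 𝔓) • (c * Φ) = (Fintype.card J : ℂ) • (c * Φ) := by
    ext i r
    simp [Algebra.smul_def]
  rw [h1, divOp_mul hc, htr, h2, zero_smul, sub_zero, pairing_add_right, pairing_smul_right]
  have h3 : pairing κ E F (twistOp D c Φ) = pairing κ E F (twistOp D c F) -
      (Fintype.card J : ℂ)⁻¹ * pairing κ E F (twistOp D c (divOp D F)) := by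
    rw [hΦ, twistOp_sub, twistOp_smul, pairing_sub_right, pairing_smul_right]
  rw [h3, key]
  field_simp
  ring

end Derivations

section Model

set_option linter.unusedSectionVars false

lemma derivation_sum_apply {ι 𝔓 : Type*} [CommRing 𝔓] [Algebra ℂ 𝔓] (s : Finset ι)
    (f : ι → Derivation ℂ 𝔓 𝔓) (p : 𝔓) : (∑ i ∈ s, f i) p = ∑ i ∈ s, f i p := by
  classical
  induction s using Finset.induction_on with
  | empty => simp
  | insert a s ha ih => simp [Finset.sum_insert ha, ih]

variable {I : Type*} [Fintype I] [DecidableEq I]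

/-- Polynomials in the entries of a matrix. -/
abbrev EntryPoly (I : Type*) := MvPolynomial (I × I) ℂ

/-- The generic matrix. -/
def genMat (I : Type*) : Matrix I I (EntryPoly I) := Matrix.of fun i j => MvPolynomial.X (i, j)

/-- Evaluation of a polynomial in the entries at a matrix. -/
def evalAt (x : Matrix I I ℂ) : EntryPoly I →ₐ[ℂ] ℂ := MvPolynomial.aeval fun p => x p.1 p.2

/-- The conjugation of polynomials which corresponds to complex conjugation on Hermitian
matrices. -/
def conjPoly (I : Type*) : EntryPoly I →+* EntryPoly I :=
  (MvPolynomial.rename Prod.swap : EntryPoly I →ₐ[ℂ] EntryPoly I).toRingHom.comp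
    (MvPolynomial.map (starRingEnd ℂ))

/-- The derivation induced by the commutator with the matrix unit `E i j`. -/
def unitDer (i j : I) : Derivation ℂ (EntryPoly I) (EntryPoly I) :=
  MvPolynomial.mkDerivation ℂ fun p =>
    (if i = p.1 then MvPolynomial.X (j, p.2) else 0) -
      (if j = p.2 then MvPolynomial.X (p.1, i) else 0)

@[simp] lemma conjPoly_X (p : I × I) :
    conjPoly I (MvPolynomial.X p) = MvPolynomial.X p.swap := by
  simp [conjPoly]

@[simp] lemma conjPoly_C (a : ℂ) :
    conjPoly I (MvPolynomial.C a) = MvPolynomial.C (star a) := by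
  simp [conjPoly]

lemma conjPoly_smul (a : ℂ) (p : EntryPoly I) : conjPoly I (a • p) = star a • conjPoly I p := by
  simp [MvPolynomial.smul_eq_C_mul]

lemma unitDer_X (i j : I) (p : I × I) : unitDer i j (MvPolynomial.X p) =
    (if i = p.1 then MvPolynomial.X (j, p.2) else 0) -
      (if j = p.2 then MvPolynomial.X (p.1, i) else 0) := by
  simp [unitDer]

lemma unitDer_conjPoly (i j : I) (p : EntryPoly I) :
    conjPoly I (unitDer i j p) = - unitDer j i (conjPoly I p) := by
  induction p using MvPolynomial.induction_on with
  | C a => simp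
  | add p q hp hq => simp only [map_add, hp, hq]; ring
  | mul_X p v hp =>
    have hX : conjPoly I (unitDer i j (MvPolynomial.X v)) =
        - unitDer j i (MvPolynomial.X v.swap) := by
      simp only [unitDer_X, map_sub, Prod.fst_swap, Prod.snd_swap, neg_sub, apply_ite (conjPoly I),
        map_zero, conjPoly_X, Prod.swap_prod_mk]
    simp only [Derivation.leibniz, smul_eq_mul, map_add, map_mul, hp, hX, conjPoly_X]
    ring

lemma unitDer_comm (i j l k : I) (p : EntryPoly I) :
    unitDer i j (unitDer l k p) = unitDer l k (unitDer i j p)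
      - (if j = l then unitDer i k p else 0) + (if i = k then unitDer l j p else 0) := by
  have h : ⁅unitDer i j, unitDer l k⁆ =
      - (if j = l then unitDer i k else 0) + (if i = k then unitDer l j else 0) := by
    refine MvPolynomial.derivation_ext fun v => ?_
    obtain ⟨a, b⟩ := v
    rw [Derivation.commutator_apply]
    simp only [Derivation.add_apply, Derivation.neg_apply, apply_ite (fun (D : Derivation ℂ (EntryPoly I) (EntryPoly I)) => D (MvPolynomial.X (a, b))),
      Derivation.zero_apply, unitDer_X, map_sub, apply_ite (unitDer i j), apply_ite (unitDer l k), map_zero]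
    grind
  have h2 := congrArg (fun D : Derivation ℂ (EntryPoly I) (EntryPoly I) => D p) h
  simp only [Derivation.commutator_apply, Derivation.add_apply, Derivation.neg_apply,
    apply_ite (fun (D : Derivation ℂ (EntryPoly I) (EntryPoly I)) => D p),
      Derivation.zero_apply] at h2
  linear_combination h2

/-- The derivations act on matrices over the polynomial ring by commutators. -/
def ActsByCommutator (c : Matrix I I (EntryPoly I)) : Prop :=
  ∀ i j, c.map (unitDer i j) = Matrix.single i j 1 * c - c * Matrix.single i j 1

lemma ActsByCommutator.apply {c : Matrix I I (EntryPoly I)} (h : ActsByCommutator c)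
    (i j p q : I) : unitDer i j (c p q) =
      (if i = p then c j q else 0) - (if j = q then c p i else 0) := by
  have := congrFun (congrFun (h i j) p) q
  simp only [Matrix.map_apply, Matrix.sub_apply] at this
  rw [this, Matrix.mul_apply, Matrix.mul_apply]
  simp [Matrix.single_apply, ite_and]

lemma map_derivation_mul {J K L 𝔓 : Type*} [Fintype K] [CommRing 𝔓] [Algebra ℂ 𝔓]
    (D : Derivation ℂ 𝔓 𝔓) (b : Matrix J K 𝔓) (c : Matrix K L 𝔓) :
    (b * c).map D = b.map D * c + b * c.map D := by
  ext i j
  simp only [Matrix.map_apply, Matrix.mul_apply, map_sum, Derivation.leibniz, smul_eq_mul,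
    Matrix.add_apply, ← Finset.sum_add_distrib]
  exact Finset.sum_congr rfl fun k _ => by ring

lemma ActsByCommutator.mul {b c : Matrix I I (EntryPoly I)} (hb : ActsByCommutator b)
    (hc : ActsByCommutator c) : ActsByCommutator (b * c) := by
  intro i j
  rw [map_derivation_mul, hb, hc]
  noncomm_ring

lemma ActsByCommutator.sub {b c : Matrix I I (EntryPoly I)} (hb : ActsByCommutator b)
    (hc : ActsByCommutator c) : ActsByCommutator (b - c) := by
  intro i j
  have : (b - c).map (unitDer i j) = b.map (unitDer i j) - c.map (unitDer i j) := by
    ext; simp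
  rw [this, hb, hc]
  noncomm_ring

lemma actsByCommutator_genMat : ActsByCommutator (genMat I) := by
  intro i j
  ext p q
  rw [Matrix.map_apply, Matrix.sub_apply, Matrix.mul_apply, Matrix.mul_apply]
  simp [genMat, unitDer_X, Matrix.single_apply, ite_and]

lemma ActsByCommutator.unitDer_trace {c : Matrix I I (EntryPoly I)} (h : ActsByCommutator c)
    (i j : I) : unitDer i j c.trace = 0 := by
  simp [Matrix.trace, h.apply]

lemma actsByCommutator_smul_one {t : EntryPoly I} (h : ∀ i j, unitDer i j t = 0) :
    ActsByCommutator (t • (1 : Matrix I I (EntryPoly I))) := by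
  intro i j
  have : (t • (1 : Matrix I I (EntryPoly I))).map (unitDer i j) = 0 := by
    ext p q
    by_cases hpq : p = q
    · subst hpq; simp [h]
    · simp [hpq]
  rw [this]
  simp

lemma sum_mul_unitDer {c : Matrix I I (EntryPoly I)} (hc : c * genMat I = genMat I * c)
    (p : EntryPoly I) : ∑ i, ∑ k, c i k * unitDer i k p = 0 := by
  have h : ∑ i, ∑ k, c i k • unitDer i k = 0 := by
    refine MvPolynomial.derivation_ext fun v => ?_
    obtain ⟨a, b⟩ := v
    have := congrFun (congrFun hc a) b
    simp only [Matrix.mul_apply, genMat, Matrix.of_apply] at this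
    simp only [derivation_sum_apply, Derivation.smul_apply, unitDer_X, smul_eq_mul,
      mul_sub, Finset.sum_sub_distrib, mul_ite, mul_zero, Derivation.zero_apply]
    rw [Finset.sum_comm]
    simp only [Finset.sum_ite_eq', Finset.mem_univ, if_true, this]
    simp [mul_comm]
  have h2 := congrArg (fun D : Derivation ℂ (EntryPoly I) (EntryPoly I) => D p) h
  simpa [derivation_sum_apply] using h2

lemma unitDer_trace_zero (p : EntryPoly I) : ∑ i, unitDer i i p = 0 := by
  simpa [Matrix.one_apply] using
    sum_mul_unitDer (c := (1 : Matrix I I (EntryPoly I))) (by simp) p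

/-- The normalized trace of a matrix of polynomials. -/
def normTr (c : Matrix I I (EntryPoly I)) : EntryPoly I := (Fintype.card I : ℂ)⁻¹ • c.trace

/-- The centred part of a matrix of polynomials. -/
def centred (c : Matrix I I (EntryPoly I)) : Matrix I I (EntryPoly I) :=
  c - normTr c • (1 : Matrix I I (EntryPoly I))

lemma trace_centred [Nonempty I] (c : Matrix I I (EntryPoly I)) : (centred c).trace = 0 := by
  have hN : (Fintype.card I : ℂ) ≠ 0 := by simp
  rw [centred, Matrix.trace_sub, Matrix.trace_smul, Matrix.trace_one, normTr, smul_assoc,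
    smul_eq_mul, mul_comm]
  have : ((Fintype.card I : ℕ) : EntryPoly I) * c.trace = (Fintype.card I : ℂ) • c.trace := by
    simp [MvPolynomial.smul_eq_C_mul]
  rw [this, smul_smul, inv_mul_cancel₀ hN, one_smul, sub_self]

/-- Hermitian symmetric commutator-equivariant matrices commuting with the generic one. -/
structure Spectral (c : Matrix I I (EntryPoly I)) : Prop where
  acts : ActsByCommutator c
  commutes : c * genMat I = genMat I * c
  herm : ∀ i k, conjPoly I (c i k) = c k i

lemma Spectral.equivariant {c : Matrix I I (EntryPoly I)} (h : Spectral c) :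
    Equivariant (conjPoly I) unitDer c where
  deriv := h.acts.apply
  central := sum_mul_unitDer h.commutes
  herm := h.herm

lemma spectral_genMat : Spectral (genMat I) where
  acts := actsByCommutator_genMat
  commutes := rfl
  herm i k := by simp [genMat]

lemma Spectral.centred {c : Matrix I I (EntryPoly I)} (h : Spectral c) : Spectral (centred c) where
  acts := h.acts.sub (actsByCommutator_smul_one fun i j => by
    rw [normTr, Derivation.map_smul, h.acts.unitDer_trace, smul_zero])
  commutes := by simp [_root_.centred, sub_mul, mul_sub, h.commutes]
  herm i k := by
    have h1 : conjPoly I (normTr c) = normTr c := by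
      simp [normTr, conjPoly_smul, Matrix.trace, h.herm]
    by_cases hik : i = k
    · subst hik; simp [_root_.centred, h1, h.herm]
    · simp [_root_.centred, h.herm, hik, Ne.symm hik]

lemma Spectral.sq {c : Matrix I I (EntryPoly I)} (h : Spectral c) : Spectral (c * c) where
  acts := h.acts.mul h.acts
  commutes := by rw [mul_assoc, h.commutes, ← mul_assoc, h.commutes, mul_assoc]
  herm i k := by
    simp only [Matrix.mul_apply, map_sum, map_mul, h.herm]
    exact Finset.sum_congr rfl fun _ _ => mul_comm _ _

lemma evalAt_conjPoly {x : Matrix I I ℂ} (hx : x.IsHermitian) (p : EntryPoly I) :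
    evalAt x (conjPoly I p) = star (evalAt x p) := by
  induction p using MvPolynomial.induction_on with
  | C a => simp [evalAt]
  | add p q hp hq => simp only [map_add, hp, hq, star_add]
  | mul_X p v hp =>
    rw [map_mul, map_mul, hp, map_mul, star_mul']
    congr 1
    simp [evalAt, ← hx.apply v.2 v.1]

end Model

section Expectation

set_option linter.unusedSectionVars false

open scoped Matrix.Norms.L2Operator

variable {I : Type*} [Fintype I] [DecidableEq I]

lemma norm_entry_le_l2_opNorm (x : Matrix I I ℂ) (i j : I) : ‖x i j‖ ≤ ‖x‖ := by
  have h := Matrix.l2_opNorm_mulVec x (EuclideanSpace.single j 1)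
  simp only [PiLp.norm_single, norm_one, mul_one] at h
  refine le_trans ?_ h
  have := PiLp.norm_apply_le ((EuclideanSpace.equiv I ℂ).symm (x *ᵥ (EuclideanSpace.single j (1 : ℂ)).ofLp)) i
  simpa using this

@[simp] lemma evalAt_X (x : Matrix I I ℂ) (v : I × I) :
    evalAt x (MvPolynomial.X v) = x v.1 v.2 := by
  simp [evalAt]

lemma measurable_evalAt (p : EntryPoly I) : Measurable fun x : Matrix I I ℂ => evalAt x p := by
  induction p using MvPolynomial.induction_on with
  | C a => simp [evalAt]
  | add p q hp hq => simp only [map_add]; exact hp.add hq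
  | mul_X p v hp =>
    have : Measurable fun x : Matrix I I ℂ => x v.1 v.2 :=
      (measurable_pi_apply v.2).comp (measurable_pi_apply v.1)
    simp only [map_mul, evalAt_X]
    exact hp.mul this

lemma exists_norm_evalAt_le (r : ℝ) (p : EntryPoly I) :
    ∃ C : ℝ, ∀ x : Matrix I I ℂ, ‖x‖ ≤ r → ‖evalAt x p‖ ≤ C := by
  induction p using MvPolynomial.induction_on with
  | C a => exact ⟨‖a‖, fun x _ => by simp [evalAt]⟩
  | add p q hp hq =>
    obtain ⟨C, hC⟩ := hp
    obtain ⟨C', hC'⟩ := hq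
    refine ⟨C + C', fun x hx => ?_⟩
    rw [map_add]
    exact (norm_add_le _ _).trans (add_le_add (hC x hx) (hC' x hx))
  | mul_X p v hp =>
    obtain ⟨C, hC⟩ := hp
    refine ⟨C * r, fun x hx => ?_⟩
    rw [map_mul, norm_mul]
    refine mul_le_mul (hC x hx) ?_ (norm_nonneg _) ((norm_nonneg _).trans (hC x hx))
    simpa [evalAt] using (norm_entry_le_l2_opNorm x v.1 v.2).trans hx

/-- Unitarily invariant measures concentrated on bounded Hermitian matrices. -/
structure InvMeasure (ν : Measure (Matrix I I ℂ)) (r : ℝ) : Prop where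
  herm : ∀ᵐ x ∂ν, x.IsHermitian
  bdd : ∀ᵐ x ∂ν, ‖x‖ ≤ r
  inv : ∀ U ∈ unitary (Matrix I I ℂ), ν.map (fun x => U * x * star U) = ν

variable {ν : Measure (Matrix I I ℂ)} [IsFiniteMeasure ν] {r : ℝ}

lemma InvMeasure.integrable (h : InvMeasure ν r) (p : EntryPoly I) :
    Integrable (fun x => evalAt x p) ν := by
  obtain ⟨C, hC⟩ := exists_norm_evalAt_le r p
  exact Integrable.of_bound (measurable_evalAt p).aestronglyMeasurable C
    (h.bdd.mono fun x hx => hC x hx)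

/-- Expectation of polynomials in the entries. -/
def InvMeasure.expect (h : InvMeasure ν r) : EntryPoly I →ₗ[ℂ] ℂ where
  toFun p := ∫ x, evalAt x p ∂ν
  map_add' p q := by
    simp only [map_add]
    exact integral_add (h.integrable p) (h.integrable q)
  map_smul' a p := by
    simp only [map_smul, RingHom.id_apply]
    exact integral_smul a _

/-- The derivation induced by the commutator with a fixed matrix. -/
def matDer (H : Matrix I I ℂ) : Derivation ℂ (EntryPoly I) (EntryPoly I) :=
  ∑ i, ∑ j, H i j • unitDer i j

lemma matDer_apply (H : Matrix I I ℂ) (p : EntryPoly I) :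
    matDer H p = ∑ i, ∑ j, H i j • unitDer i j p := by
  simp [matDer, derivation_sum_apply]

lemma evalAt_matDer_X (H x : Matrix I I ℂ) (v : I × I) :
    evalAt x (matDer H (MvPolynomial.X v)) = (H * x - x * H) v.1 v.2 := by
  simp only [matDer_apply, map_sum, map_smul, unitDer_X, map_sub, apply_ite (evalAt x), map_zero,
    smul_eq_mul, mul_sub, Finset.sum_sub_distrib, mul_ite, mul_zero]
  rw [Finset.sum_comm, Matrix.sub_apply, Matrix.mul_apply, Matrix.mul_apply]
  simp [evalAt, mul_comm]

lemma hasDerivAt_evalAt {Y : ℝ → Matrix I I ℂ} {H : Matrix I I ℂ} {t : ℝ}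
    (hY : HasDerivAt Y (H * Y t - Y t * H) t) (p : EntryPoly I) :
    HasDerivAt (fun s => evalAt (Y s) p) (evalAt (Y t) (matDer H p)) t := by
  induction p using MvPolynomial.induction_on with
  | C a => simpa [evalAt] using hasDerivAt_const t a
  | add p q hp hq => simp only [map_add]; exact hp.add hq
  | mul_X p v hp =>
    have h1 : HasDerivAt (fun s => Y s v.1 v.2) ((H * Y t - Y t * H) v.1 v.2) t :=
      (LinearMap.toContinuousLinearMap
        (Matrix.entryLinearMap ℝ ℂ v.1 v.2 : Matrix I I ℂ →ₗ[ℝ] ℂ)).hasFDerivAt.comp_hasDerivAt t hY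
    have h2 := hp.mul h1
    rw [Derivation.leibniz, map_add, smul_eq_mul, map_mul, smul_eq_mul, map_mul, evalAt_matDer_X]
    simp only [map_mul, evalAt_X]
    refine h2.congr_deriv ?_
    ring

lemma InvMeasure.integral_matDer_of_skew (h : InvMeasure ν r) {H : Matrix I I ℂ}
    (hH : H ∈ skewAdjoint (Matrix I I ℂ)) (p : EntryPoly I) :
    ∫ x, evalAt x (matDer H p) ∂ν = 0 := by
  let : NormedAlgebra ℚ (Matrix I I ℂ) := NormedAlgebra.restrictScalars ℚ ℂ _
  let U : ℝ → Matrix I I ℂ := fun t => NormedSpace.exp (t • H)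
  let Y : ℝ → Matrix I I ℂ → Matrix I I ℂ := fun t x => U t * x * star (U t)
  have hU : ∀ t, U t ∈ unitary (Matrix I I ℂ) := fun t =>
    NormedSpace.exp_mem_unitary_of_mem_skewAdjoint (skewAdjoint.smul_mem t hH)
  have hstar : ∀ t, star (U t) = NormedSpace.exp (t • (-H)) := by
    intro t
    simp only [U]
    rw [NormedSpace.star_exp, star_smul, skewAdjoint.mem_iff.mp hH]; simp
  have hY : ∀ t x, HasDerivAt (fun s => Y s x) (H * Y t x - Y t x * H) t := by
    intro t x
    have h1 : HasDerivAt U (H * U t) t := hasDerivAt_exp_smul_const' H t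
    have h2 : HasDerivAt (fun s => star (U s)) (star (U t) * (-H)) t := by
      rw [hstar, funext hstar]
      exact hasDerivAt_exp_smul_const (-H) t
    have h3 := (h1.mul_const x).mul h2
    refine h3.congr_deriv ?_
    change _ = H * (U t * x * star (U t)) - U t * x * star (U t) * H
    noncomm_ring
  have hYm : ∀ t, Measurable (Y t) := by
    intro t
    refine measurable_pi_iff.2 fun i => measurable_pi_iff.2 fun j => ?_
    change Measurable fun x : Matrix I I ℂ => (U t * x * star (U t)) i j
    simp only [Matrix.mul_apply]
    refine Finset.measurable_sum _ fun k _ => Measurable.mul_const ?_ _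
    refine Finset.measurable_sum _ fun l _ => Measurable.const_mul ?_ _
    exact (measurable_pi_apply k).comp (measurable_pi_apply l)
  have hYn : ∀ t x, ‖x‖ ≤ r → ‖Y t x‖ ≤ r := by
    intro t x hx
    simp only [Y]
    rw [CStarRing.norm_mul_mem_unitary _ (Unitary.star_mem (hU t)),
      CStarRing.norm_mem_unitary_mul _ (hU t)]
    exact hx
  obtain ⟨C, hC⟩ := exists_norm_evalAt_le r (matDer H p)
  have hconst : ∀ t, ∫ x, evalAt (Y t x) p ∂ν = ∫ x, evalAt x p ∂ν := by
    intro t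
    conv_rhs => rw [← h.inv (U t) (hU t)]
    rw [integral_map (hYm t).aemeasurable (measurable_evalAt p).aestronglyMeasurable]
  have hder := (hasDerivAt_integral_of_dominated_loc_of_deriv_le (μ := ν) (𝕜 := ℝ) (x₀ := 0)
    (s := Set.univ) (F := fun t x => evalAt (Y t x) p)
    (F' := fun t x => evalAt (Y t x) (matDer H p)) (bound := fun _ => C) univ_mem
    (Eventually.of_forall fun t =>
      ((measurable_evalAt p).comp (hYm t)).aestronglyMeasurable) ?_
    ((measurable_evalAt _).comp (hYm 0)).aestronglyMeasurable
    (h.bdd.mono fun x hx t _ => hC _ (hYn t x hx)) (integrable_const C)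
    (Eventually.of_forall fun x t _ => hasDerivAt_evalAt (hY t x) p)).2
  · simp only [hconst] at hder
    have h0 := hder.unique (hasDerivAt_const (0 : ℝ) (∫ x, evalAt x p ∂ν))
    simpa [Y, U] using h0
  · simpa [Y, U] using h.integrable p

lemma matDer_single (i j : I) : matDer (Matrix.single i j 1) = unitDer i j := by
  simp only [matDer, Matrix.single_apply, ite_and, ite_smul, one_smul, zero_smul]
  simp

lemma matDer_add (H K : Matrix I I ℂ) : matDer (H + K) = matDer H + matDer K := by
  simp [matDer, add_smul, Finset.sum_add_distrib]

lemma matDer_smul (a : ℂ) (H : Matrix I I ℂ) : matDer (a • H) = a • matDer H := by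
  simp [matDer, Finset.smul_sum, smul_smul]

/-- Integration by parts. -/
lemma InvMeasure.expect_unitDer (h : InvMeasure ν r) (i j : I) (p : EntryPoly I) :
    h.expect (unitDer i j p) = 0 := by
  have key : ∀ H ∈ skewAdjoint (Matrix I I ℂ), h.expect (matDer H p) = 0 := fun H hH =>
    h.integral_matDer_of_skew hH p
  let e := Matrix.single i j (1 : ℂ)
  have he : e = (1 / 2 : ℂ) • (e - star e) +
      (-(Complex.I / 2)) • (Complex.I • (e + star e)) := by
    rw [smul_smul]
    have : -(Complex.I / 2) * Complex.I = 1 / 2 := by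
      linear_combination (-1 / 2 : ℂ) * Complex.I_sq
    rw [this, ← smul_add, sub_add_add_cancel, ← two_smul ℂ e, smul_smul]
    norm_num
  have h1 : e - star e ∈ skewAdjoint (Matrix I I ℂ) := by
    rw [skewAdjoint.mem_iff]; simp
  have h2 : Complex.I • (e + star e) ∈ skewAdjoint (Matrix I I ℂ) := by
    rw [skewAdjoint.mem_iff]; simp [add_comm]
  have h3 : unitDer i j = matDer e := (matDer_single i j).symm
  rw [h3, he, matDer_add, matDer_smul, matDer_smul, Derivation.add_apply, Derivation.smul_apply,
    Derivation.smul_apply, map_add, map_smul, map_smul, key _ h1, key _ h2]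
  simp

lemma InvMeasure.glAction (h : InvMeasure ν r) :
    GLAction (conjPoly I) h.expect (unitDer (I := I)) where
  adj i j p q := by
    have h1 := h.expect_unitDer j i (conjPoly I p * q)
    rw [Derivation.leibniz, map_add, smul_eq_mul, smul_eq_mul] at h1
    rw [unitDer_conjPoly, neg_mul, map_neg, mul_comm (unitDer j i _) q]
    linear_combination -h1
  comm := unitDer_comm
  trace := unitDer_trace_zero
  conj_smul := conjPoly_smul

end Expectation

section Estimates

set_option linter.unusedSectionVars false

open scoped Matrix.Norms.L2Operator

variable {I J R : Type*} [Fintype I] [DecidableEq I] [Fintype J] [DecidableEq J] [Fintype R]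
variable {ν : Measure (Matrix I I ℂ)} [IsFiniteMeasure ν] {r : ℝ}

lemma InvMeasure.expect_re (h : InvMeasure ν r) (p : EntryPoly I) :
    (h.expect p).re = ∫ x, (evalAt x p).re ∂ν :=
  (integral_re (h.integrable p)).symm

lemma InvMeasure.expect_re_nonneg (h : InvMeasure ν r) {p : EntryPoly I}
    (hp : ∀ᵐ x ∂ν, 0 ≤ (evalAt x p).re) : 0 ≤ (h.expect p).re := by
  rw [h.expect_re]
  exact integral_nonneg_of_ae hp

/-- The mean square of a polynomial. -/
def InvMeasure.meanSq (h : InvMeasure ν r) (p : EntryPoly I) : ℝ :=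
  (h.expect (conjPoly I p * p)).re

lemma re_star_mul_self (z : ℂ) : (star z * z).re = ‖z‖ ^ 2 := by
  simp [Complex.sq_norm, Complex.normSq_apply]

lemma InvMeasure.meanSq_nonneg (h : InvMeasure ν r) (p : EntryPoly I) : 0 ≤ h.meanSq p := by
  refine h.expect_re_nonneg (h.herm.mono fun x hx => ?_)
  rw [map_mul, evalAt_conjPoly hx, re_star_mul_self]
  positivity

lemma InvMeasure.abs_expect_re_le (h : InvMeasure ν r) (p q : EntryPoly I) :
    |(h.expect (conjPoly I p * q)).re| ≤ (h.meanSq p + h.meanSq q) / 2 := by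
  have h1 : ∀ s : ℝ, s ^ 2 = 1 → 0 ≤ (h.meanSq p + h.meanSq q) / 2 +
      s * (h.expect (conjPoly I p * q)).re := by
    intro s hs
    have h2 : 0 ≤ (h.expect ((1 / 2 : ℝ) • (conjPoly I p * p + conjPoly I q * q) +
        s • (conjPoly I p * q))).re := by
      refine h.expect_re_nonneg (h.herm.mono fun x hx => ?_)
      have hr : ∀ (t : ℝ) (p : EntryPoly I), evalAt x (t • p) = t • evalAt x p := fun t p => by
        rw [← algebraMap_smul ℂ t p, map_smul, algebraMap_smul]
      simp only [map_add, hr, map_mul, evalAt_conjPoly hx]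
      simp only [Complex.add_re, Complex.smul_re, smul_eq_mul, Complex.star_def, Complex.mul_re,
        Complex.conj_re, Complex.conj_im]
      rcases (show s = 1 ∨ s = -1 by simpa using hs) with hs' | hs' <;>
      rw [hs'] <;>
      nlinarith [sq_nonneg ((evalAt x p).re + (evalAt x q).re),
        sq_nonneg ((evalAt x p).im + (evalAt x q).im),
        sq_nonneg ((evalAt x p).re - (evalAt x q).re),
        sq_nonneg ((evalAt x p).im - (evalAt x q).im)]
    have hr : ∀ (t : ℝ) (p : EntryPoly I), h.expect (t • p) = t • h.expect p := fun t p => by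
        rw [← algebraMap_smul ℂ t p, map_smul, algebraMap_smul]
    simp only [map_add, hr, Complex.add_re, Complex.smul_re, smul_eq_mul] at h2
    simp only [InvMeasure.meanSq]
    linarith
  have h2 := h1 1 (by norm_num)
  have h3 := h1 (-1) (by norm_num)
  rw [abs_le]
  constructor <;> linarith

/-- Entrywise evaluation of a matrix of polynomials. -/
def evalMat (x : Matrix I I ℂ) {K L : Type*} (F : Matrix K L (EntryPoly I)) : Matrix K L ℂ :=
  F.map (evalAt x)

lemma evalMat_mul (x : Matrix I I ℂ) {K L M : Type*} [Fintype L] (F : Matrix K L (EntryPoly I))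
    (G : Matrix L M (EntryPoly I)) : evalMat x (F * G) = evalMat x F * evalMat x G :=
  Matrix.map_mul

lemma evalMat_sub (x : Matrix I I ℂ) {K L : Type*} (F G : Matrix K L (EntryPoly I)) :
    evalMat x (F - G) = evalMat x F - evalMat x G := by
  ext; simp [evalMat]

lemma evalMat_add (x : Matrix I I ℂ) {K L : Type*} (F G : Matrix K L (EntryPoly I)) :
    evalMat x (F + G) = evalMat x F + evalMat x G := by
  ext; simp [evalMat]

lemma evalMat_one (x : Matrix I I ℂ) {K : Type*} [DecidableEq K] :
    evalMat x (1 : Matrix K K (EntryPoly I)) = 1 := by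
  ext i j
  by_cases hij : i = j <;> simp [evalMat, Matrix.one_apply, hij]

lemma evalMat_smul (x : Matrix I I ℂ) {K L : Type*} (p : EntryPoly I)
    (F : Matrix K L (EntryPoly I)) : evalMat x (p • F) = evalAt x p • evalMat x F := by
  ext; simp [evalMat]

lemma evalMat_genMat (x : Matrix I I ℂ) : evalMat x (genMat I) = x := by
  ext; simp [evalMat, genMat]

lemma evalAt_trace (x : Matrix I I ℂ) (c : Matrix J J (EntryPoly I)) :
    evalAt x c.trace = (evalMat x c).trace := by
  simp [Matrix.trace, evalMat]

/-- The normalized trace. -/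
def ntr (x : Matrix I I ℂ) : ℂ := (Fintype.card I : ℂ)⁻¹ * x.trace

lemma evalAt_normTr (x : Matrix I I ℂ) (c : Matrix I I (EntryPoly I)) :
    evalAt x (normTr c) = ntr (evalMat x c) := by
  rw [normTr, map_smul, evalAt_trace, ntr, smul_eq_mul]

lemma evalMat_centred (x : Matrix I I ℂ) (c : Matrix I I (EntryPoly I)) :
    evalMat x (centred c) = evalMat x c - ntr (evalMat x c) • 1 := by
  rw [centred, evalMat_sub, evalMat_smul, evalMat_one, evalAt_normTr]

lemma norm_ntr_le (y : Matrix I I ℂ) : ‖ntr y‖ ≤ ‖y‖ := by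
  rcases isEmpty_or_nonempty I with hI | hI
  · simp [ntr, Matrix.trace]
  have hN : (0 : ℝ) < Fintype.card I := by exact_mod_cast Fintype.card_pos
  have h1 : ‖y.trace‖ ≤ Fintype.card I * ‖y‖ := by
    refine (norm_sum_le _ _).trans ?_
    refine (Finset.sum_le_sum fun i _ => norm_entry_le_l2_opNorm y i i).trans ?_
    simp
  rw [ntr, norm_mul, norm_inv, Complex.norm_natCast, inv_mul_le_iff₀ hN]
  exact h1

lemma norm_sub_ntr_le [Nonempty I] (y : Matrix I I ℂ) : ‖y - ntr y • 1‖ ≤ 2 * ‖y‖ := by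
  refine (norm_sub_le _ _).trans ?_
  rw [norm_smul, CStarRing.norm_one]
  linarith [norm_ntr_le y]

lemma sum_norm_mulVec_le (y : Matrix I I ℂ) (v : I → ℂ) :
    ∑ i, ‖∑ k, y i k * v k‖ ^ 2 ≤ ‖y‖ ^ 2 * ∑ k, ‖v k‖ ^ 2 := by
  have h := Matrix.l2_opNorm_mulVec y (WithLp.toLp 2 v)
  have h2 := pow_le_pow_left₀ (norm_nonneg _) h 2
  rw [mul_pow, EuclideanSpace.norm_sq_eq, EuclideanSpace.norm_sq_eq] at h2
  simpa [Matrix.mulVec, dotProduct] using h2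

lemma sum_norm_vecMul_le {y : Matrix I I ℂ} (hy : y.IsHermitian) (v : I → ℂ) :
    ∑ i, ‖∑ k, y k i * v k‖ ^ 2 ≤ ‖y‖ ^ 2 * ∑ k, ‖v k‖ ^ 2 := by
  have h := sum_norm_mulVec_le y (fun k => star (v k))
  simp only [norm_star] at h
  refine le_trans (le_of_eq ?_) h
  refine Finset.sum_congr rfl fun i _ => ?_
  rw [← norm_star, star_sum]
  congr 2
  refine Finset.sum_congr rfl fun k _ => ?_
  rw [star_mul', hy.apply]

/-- The energy of an array with respect to a family of derivations. -/
def InvMeasure.energy (h : InvMeasure ν r) (D : J → J → Derivation ℂ (EntryPoly I) (EntryPoly I))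
    {K : Type*} [Fintype K] (F : Matrix K R (EntryPoly I)) : ℝ :=
  ∑ s, ∑ l, ∑ i, ∑ j, h.meanSq (D i j (F l s))

lemma InvMeasure.energy_nonneg (h : InvMeasure ν r)
    (D : J → J → Derivation ℂ (EntryPoly I) (EntryPoly I)) (F : Matrix J R (EntryPoly I)) :
    0 ≤ h.energy D F :=
  Finset.sum_nonneg fun _ _ => Finset.sum_nonneg fun _ _ => Finset.sum_nonneg fun _ _ =>
    Finset.sum_nonneg fun _ _ => h.meanSq_nonneg _

lemma InvMeasure.meanSq_eq (h : InvMeasure ν r) (p : EntryPoly I) :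
    h.meanSq p = ∫ x, ‖evalAt x p‖ ^ 2 ∂ν := by
  rw [InvMeasure.meanSq, h.expect_re]
  refine integral_congr_ae (h.herm.mono fun x hx => ?_)
  simp only [map_mul, evalAt_conjPoly hx, re_star_mul_self]

lemma InvMeasure.integrable_sq (h : InvMeasure ν r) (p : EntryPoly I) :
    Integrable (fun x => ‖evalAt x p‖ ^ 2) ν := by
  refine (h.integrable (conjPoly I p * p)).re.congr (h.herm.mono fun x hx => ?_)
  simp only [map_mul, evalAt_conjPoly hx]
  exact re_star_mul_self _

/-- `c` is bounded by `C` as an operator acting on vectors from the right. -/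
def BoundedBy (ν : Measure (Matrix I I ℂ)) (c : Matrix J J (EntryPoly I)) (C : ℝ) : Prop :=
  ∀ᵐ x ∂ν, ∀ v : J → ℂ,
    ∑ i, ‖∑ k, evalAt x (c k i) * v k‖ ^ 2 ≤ C ^ 2 * ∑ k, ‖v k‖ ^ 2

lemma boundedBy_one : BoundedBy ν (1 : Matrix J J (EntryPoly I)) 1 := by
  refine Eventually.of_forall fun x v => le_of_eq ?_
  simp only [Matrix.one_apply, apply_ite (evalAt x), map_one, map_zero, ite_mul, one_mul, zero_mul]
  simp

lemma InvMeasure.abs_resid_le (h : InvMeasure ν r)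
    (D : J → J → Derivation ℂ (EntryPoly I) (EntryPoly I)) (c : Matrix J J (EntryPoly I)) {C : ℝ}
    (hc : BoundedBy ν c C) (F : Matrix J R (EntryPoly I)) :
    |(resid (conjPoly I) h.expect D c F F).re| ≤ (C ^ 2 + 1) / 2 * h.energy D F := by
  have h1 : ∀ p : J → EntryPoly I,
      ∑ i, h.meanSq (∑ k, c k i * p k) ≤ C ^ 2 * ∑ k, h.meanSq (p k) := by
    intro p
    simp only [h.meanSq_eq]
    rw [← integral_finsetSum _ fun i _ => h.integrable_sq _,
      ← integral_finsetSum _ fun i _ => h.integrable_sq _, ← integral_const_mul]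
    refine integral_mono_ae (integrable_finsetSum _ fun i _ => h.integrable_sq _)
      ((integrable_finsetSum _ fun i _ => h.integrable_sq _).const_mul _) (hc.mono fun x hx => ?_)
    simpa using hx fun k => evalAt x (p k)
  have h2 : (resid (conjPoly I) h.expect D c F F).re = ∑ s, ∑ j, ∑ l, ∑ i,
      (h.expect (conjPoly I (∑ k, c k i * D k l (F j s)) * D i j (F l s))).re := by
    simp only [resid, Complex.re_sum, map_sum, Finset.sum_mul]
  have h3 : ∀ s j l, |∑ i, (h.expect (conjPoly I (∑ k, c k i * D k l (F j s)) *
      D i j (F l s))).re| ≤ C ^ 2 / 2 * ∑ k, h.meanSq (D k l (F j s)) +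
        1 / 2 * ∑ i, h.meanSq (D i j (F l s)) := by
    intro s j l
    refine (Finset.abs_sum_le_sum_abs _ _).trans ?_
    refine (Finset.sum_le_sum fun i _ => h.abs_expect_re_le _ _).trans ?_
    have := h1 fun k => D k l (F j s)
    rw [← Finset.sum_div, Finset.sum_add_distrib]
    linarith
  rw [h2]
  calc _ ≤ ∑ s, ∑ j, ∑ l, (C ^ 2 / 2 * ∑ k, h.meanSq (D k l (F j s)) +
        1 / 2 * ∑ i, h.meanSq (D i j (F l s))) := by
        refine (Finset.abs_sum_le_sum_abs _ _).trans (Finset.sum_le_sum fun s _ => ?_)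
        refine (Finset.abs_sum_le_sum_abs _ _).trans (Finset.sum_le_sum fun j _ => ?_)
        exact (Finset.abs_sum_le_sum_abs _ _).trans (Finset.sum_le_sum fun l _ => h3 s j l)
    _ = _ := by
        simp only [Finset.sum_add_distrib, ← Finset.mul_sum]
        have e1 : ∑ s, ∑ j, ∑ l, ∑ k, h.meanSq (D k l (F j s)) = h.energy D F := by
          refine Finset.sum_congr rfl fun s _ => Finset.sum_congr rfl fun l _ => ?_
          rw [Finset.sum_comm]
        have e2 : ∑ s, ∑ j, ∑ l, ∑ i, h.meanSq (D i j (F l s)) = h.energy D F := by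
          refine Finset.sum_congr rfl fun s _ => ?_
          rw [Finset.sum_comm]
          refine Finset.sum_congr rfl fun l _ => ?_
          rw [Finset.sum_comm]
        rw [e1, e2]
        ring

end Estimates

section Quadratic

set_option linter.unusedSectionVars false

open scoped Matrix.Norms.L2Operator

variable {I J R : Type*} [Fintype I] [DecidableEq I] [Fintype J] [DecidableEq J] [Fintype R]
variable {ν : Measure (Matrix I I ℂ)} [IsFiniteMeasure ν] {r : ℝ}

lemma re_trace_conjTranspose_mul_self_nonneg (g : Matrix J R ℂ) : 0 ≤ (gᴴ * g).trace.re :=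
  (Complex.le_def.1 (Matrix.posSemidef_conjTranspose_mul_self g).trace_nonneg).1

lemma quadratic_pointwise {x y : Matrix I I ℂ} {τ τ₂ m' a t s : ℝ} (hx : x = y + (τ : ℂ) • 1)
    (hy : y.IsHermitian) (hm : m' ≤ τ) (ha : (y + (a : ℂ) • 1).PosSemidef) (ht : 0 < t)
    (hs : τ₂ ≤ s) (φ ψ : Matrix I R ℂ) :
    m' * ((φ + ψ)ᴴ * (φ + ψ)).trace.re + (φᴴ * (y * φ)).trace.re
      - (a + t) * (ψᴴ * ψ).trace.re
      - t⁻¹ * (s * (φᴴ * φ).trace.re + (φᴴ * ((y * y - (τ₂ : ℂ) • 1) * φ)).trace.re)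
      ≤ ((φ + ψ)ᴴ * (x * (φ + ψ))).trace.re := by
  have h1 := re_trace_conjTranspose_mul_self_nonneg (φ + ψ)
  have h2 := re_trace_conjTranspose_mul_self_nonneg φ
  have h3 := re_trace_conjTranspose_mul_self_nonneg ((t : ℂ) • ψ + y * φ)
  have h4 : 0 ≤ (ψᴴ * (y + (a : ℂ) • 1) * ψ).trace.re :=
    (Complex.le_def.1 (ha.conjTranspose_mul_mul_same ψ).trace_nonneg).1
  have e3 : ((t : ℂ) • ψ + y * φ)ᴴ * ((t : ℂ) • ψ + y * φ) =
      ((t ^ 2 : ℝ) : ℂ) • (ψᴴ * ψ) + (t : ℂ) • (ψᴴ * (y * φ)) + (t : ℂ) • (φᴴ * (y * ψ))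
        + φᴴ * (y * (y * φ)) := by
    simp only [Matrix.conjTranspose_add, Matrix.conjTranspose_smul, Matrix.conjTranspose_mul,
      hy.eq, Matrix.add_mul, Matrix.mul_add, Matrix.smul_mul, Matrix.mul_smul,
      Complex.star_def, Complex.conj_ofReal, Matrix.mul_assoc]
    push_cast
    module
  have e4 : ψᴴ * (y + (a : ℂ) • 1) * ψ = ψᴴ * (y * ψ) + (a : ℂ) • (ψᴴ * ψ) := by
    simp only [Matrix.add_mul, Matrix.mul_add, Matrix.smul_mul, Matrix.mul_smul, Matrix.mul_one,
      Matrix.mul_assoc]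
  have e5 : φᴴ * ((y * y - (τ₂ : ℂ) • 1) * φ) = φᴴ * (y * (y * φ)) - (τ₂ : ℂ) • (φᴴ * φ) := by
    simp only [Matrix.sub_mul, Matrix.mul_sub, Matrix.smul_mul, Matrix.mul_smul, Matrix.one_mul,
      Matrix.mul_assoc]
  have e6 : (φ + ψ)ᴴ * (x * (φ + ψ)) = φᴴ * (y * φ) + φᴴ * (y * ψ) + ψᴴ * (y * φ) +
      ψᴴ * (y * ψ) + (τ : ℂ) • ((φ + ψ)ᴴ * (φ + ψ)) := by
    rw [hx]
    simp only [Matrix.conjTranspose_add, Matrix.add_mul, Matrix.mul_add, Matrix.smul_mul,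
      Matrix.mul_smul, Matrix.one_mul]
    module
  rw [e3] at h3
  rw [e4] at h4
  rw [e5, e6]
  simp only [Matrix.trace_add, Matrix.trace_sub, Matrix.trace_smul, Complex.add_re, Complex.sub_re,
    smul_eq_mul, Complex.re_ofReal_mul] at h3 h4 ⊢
  set P := ((φ + ψ)ᴴ * (φ + ψ)).trace.re
  set Q := (φᴴ * φ).trace.re
  set V := (φᴴ * (y * (y * φ))).trace.re
  have h5 : 0 ≤ (τ - m') * P := mul_nonneg (by linarith) h1
  have h6 : 0 ≤ t⁻¹ * ((s - τ₂) * Q) :=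
    mul_nonneg (by positivity) (mul_nonneg (by linarith) h2)
  have h7 := mul_nonneg (inv_nonneg.2 ht.le) h3
  have h8 : t⁻¹ * (t ^ 2 * (ψᴴ * ψ).trace.re + t * (ψᴴ * (y * φ)).trace.re +
      t * (φᴴ * (y * ψ)).trace.re + V) = t * (ψᴴ * ψ).trace.re + (ψᴴ * (y * φ)).trace.re +
      (φᴴ * (y * ψ)).trace.re + t⁻¹ * V := by
    field_simp
  rw [h8] at h7
  nlinarith

/-- The integrand of `pairing`. -/
def dotPoly (G F : Matrix J R (EntryPoly I)) : EntryPoly I :=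
  ∑ s, ∑ j, conjPoly I (G j s) * F j s

lemma pairing_eq_dotPoly (E : EntryPoly I →ₗ[ℂ] ℂ) (G F : Matrix J R (EntryPoly I)) :
    pairing (conjPoly I) E G F = E (dotPoly G F) := by
  simp [pairing, dotPoly]

lemma evalAt_dotPoly {x : Matrix I I ℂ} (hx : x.IsHermitian) (G F : Matrix J R (EntryPoly I)) :
    evalAt x (dotPoly G F) = ((evalMat x G)ᴴ * evalMat x F).trace := by
  simp [dotPoly, Matrix.trace, Matrix.mul_apply, evalMat, evalAt_conjPoly hx]

/-- Hermitian matrices with prescribed bounds on spectrum, mean and variance. -/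
structure GoodMat (A' r m' m'' s : ℝ) (x : Matrix I I ℂ) : Prop where
  herm : x.IsHermitian
  bdd : ‖x‖ ≤ r
  low : (x - (A' : ℂ) • 1).PosSemidef
  mean_ge : m' ≤ (ntr x).re
  mean_le : (ntr x).re ≤ m''
  var_le : (ntr ((x - ntr x • 1) * (x - ntr x • 1))).re ≤ s

lemma ntr_eq_re {x : Matrix I I ℂ} (hx : x.IsHermitian) : ntr x = ((ntr x).re : ℂ) := by
  have h1 : star x.trace = x.trace := by rw [← Matrix.trace_conjTranspose, hx.eq]
  have h2 : star (ntr x) = ntr x := by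
    rw [ntr, star_mul', h1]; simp
  exact (Complex.conj_eq_iff_re.1 h2).symm

lemma isHermitian_real_smul_one (a : ℝ) : ((a : ℂ) • (1 : Matrix I I ℂ)).IsHermitian := by
  simp [Matrix.IsHermitian, Matrix.conjTranspose_smul]

lemma isHermitian_sub_ntr {x : Matrix I I ℂ} (hx : x.IsHermitian) :
    (x - ntr x • 1).IsHermitian := by
  rw [ntr_eq_re hx]
  exact hx.sub (isHermitian_real_smul_one _)

lemma InvMeasure.quadratic_expect (h : InvMeasure ν r) {A' m' m'' s t : ℝ}
    (hg : ∀ᵐ x ∂ν, GoodMat A' r m' m'' s x) (ht : 0 < t) (Φ Ψ : Matrix I R (EntryPoly I)) :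
    m' * (pairing (conjPoly I) h.expect (Φ + Ψ) (Φ + Ψ)).re
      + (pairing (conjPoly I) h.expect Φ (centred (genMat I) * Φ)).re
      - (m'' - A' + t) * (pairing (conjPoly I) h.expect Ψ Ψ).re
      - t⁻¹ * (s * (pairing (conjPoly I) h.expect Φ Φ).re + (pairing (conjPoly I) h.expect Φ
        (centred (centred (genMat I) * centred (genMat I)) * Φ)).re)
      ≤ (pairing (conjPoly I) h.expect (Φ + Ψ) (genMat I * (Φ + Ψ))).re := by
  simp only [pairing_eq_dotPoly]
  have key : 0 ≤ (h.expect (dotPoly (Φ + Ψ) (genMat I * (Φ + Ψ)) -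
      ((m' : ℂ) • dotPoly (Φ + Ψ) (Φ + Ψ) + dotPoly Φ (centred (genMat I) * Φ)
        - ((m'' - A' + t : ℝ) : ℂ) • dotPoly Ψ Ψ
        - ((t⁻¹ : ℝ) : ℂ) • ((s : ℂ) • dotPoly Φ Φ +
          dotPoly Φ (centred (centred (genMat I) * centred (genMat I)) * Φ))))).re := by
    refine h.expect_re_nonneg (hg.mono fun x hx => ?_)
    have hy := isHermitian_sub_ntr hx.herm
    have hyy : ((x - ntr x • 1) * (x - ntr x • 1)).IsHermitian := by
      rw [Matrix.IsHermitian, Matrix.conjTranspose_mul, hy.eq]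
    have hxy : x = (x - ntr x • 1) + ((ntr x).re : ℂ) • 1 := by
      rw [← ntr_eq_re hx.herm]; simp
    have ha : ((x - ntr x • 1) + ((m'' - A' : ℝ) : ℂ) • 1).PosSemidef := by
      have : (x - ntr x • 1) + ((m'' - A' : ℝ) : ℂ) • (1 : Matrix I I ℂ) =
          (x - (A' : ℂ) • 1) + ((m'' - (ntr x).re : ℝ) : ℂ) • 1 := by
        rw [ntr_eq_re hx.herm]
        simp only [Complex.ofReal_sub, sub_smul, Complex.ofReal_re]
        abel
      rw [this]
      refine hx.low.add (Matrix.PosSemidef.one.smul ?_)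
      rw [Complex.zero_le_real]
      linarith [hx.mean_le]
    have := quadratic_pointwise hxy hy hx.mean_ge ha ht hx.var_le (evalMat x Φ) (evalMat x Ψ)
    rw [← ntr_eq_re hyy] at this
    simp only [map_sub, map_add, map_smul, smul_eq_mul, Complex.sub_re, Complex.add_re,
      Complex.re_ofReal_mul, evalAt_dotPoly hx.herm, evalMat_mul, evalMat_add, evalMat_centred,
      evalMat_genMat] at this ⊢
    linarith
  simp only [map_sub, map_add, map_smul, smul_eq_mul, Complex.sub_re, Complex.add_re,
    Complex.re_ofReal_mul] at key
  linarith

lemma boundedBy_of_spectral {c : Matrix I I (EntryPoly I)} (hc : Spectral c) {C : ℝ}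
    (hν : ∀ᵐ x ∂ν, x.IsHermitian) (hC : ∀ᵐ x ∂ν, ‖evalMat x c‖ ≤ C) : BoundedBy ν c C := by
  filter_upwards [hν, hC] with x hx hx2 v
  have h1 : (evalMat x c).IsHermitian := by
    ext i k
    simp only [evalMat, Matrix.conjTranspose_apply, Matrix.map_apply, ← evalAt_conjPoly hx, hc.herm]
  refine (sum_norm_vecMul_le h1 v).trans ?_
  have : 0 ≤ ∑ k, ‖v k‖ ^ 2 := Finset.sum_nonneg fun _ _ => by positivity
  gcongr

lemma InvMeasure.re_pairing_self_nonneg (h : InvMeasure ν r) (F : Matrix J R (EntryPoly I)) :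
    0 ≤ (pairing (conjPoly I) h.expect F F).re := by
  rw [pairing_eq_dotPoly]
  refine h.expect_re_nonneg (h.herm.mono fun x hx => ?_)
  rw [evalAt_dotPoly hx]
  exact re_trace_conjTranspose_mul_self_nonneg _

/-- The normalized divergence operator. -/
def avgDiv (D : J → J → Derivation ℂ (EntryPoly I) (EntryPoly I)) (F : Matrix J R (EntryPoly I)) :
    Matrix J R (EntryPoly I) :=
  (Fintype.card J : ℂ)⁻¹ • divOp D F

lemma pairing_avgDiv_left {E : EntryPoly I →ₗ[ℂ] ℂ}
    {D : J → J → Derivation ℂ (EntryPoly I) (EntryPoly I)} (h : GLAction (conjPoly I) E D)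
    (F : Matrix J R (EntryPoly I)) :
    pairing (conjPoly I) E (avgDiv D F) F = pairing (conjPoly I) E F (avgDiv D F) := by
  rw [avgDiv, pairing_smul_left h, pairing_smul_right, pairing_divOp h]
  simp

lemma InvMeasure.abs_avgDiv_sub_le [Nonempty J] (h : InvMeasure ν r)
    {D : J → J → Derivation ℂ (EntryPoly I) (EntryPoly I)} (hD : GLAction (conjPoly I) h.expect D)
    (F : Matrix J R (EntryPoly I)) :
    |(pairing (conjPoly I) h.expect (avgDiv D F) (avgDiv D F)).re -
      (pairing (conjPoly I) h.expect F (avgDiv D F)).re| ≤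
      ((Fintype.card J : ℝ) ^ 2)⁻¹ * h.energy D F := by
  have h1 := pairing_self_divOp hD F
  have h2 := h.abs_resid_le D 1 boundedBy_one F
  have hcast : ((Fintype.card J : ℂ)⁻¹) ^ 2 = ((((Fintype.card J : ℝ) ^ 2)⁻¹ : ℝ) : ℂ) := by
    push_cast; rw [inv_pow]
  rw [hcast] at h1
  rw [avgDiv, h1, Complex.add_re, add_sub_cancel_left, Complex.re_ofReal_mul, abs_mul,
    abs_of_nonneg (by positivity : (0 : ℝ) ≤ ((Fintype.card J : ℝ) ^ 2)⁻¹)]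
  refine mul_le_mul_of_nonneg_left (h2.trans (le_of_eq (by ring))) (by positivity)

/-- The constant in front of the error term of `InvMeasure.quadratic_lower`. -/
def errConst (r a s t : ℝ) : ℝ :=
  ((2 * r) ^ 2 + 1) / 2 + (a + t) + t⁻¹ * s + t⁻¹ * (((8 * r ^ 2) ^ 2 + 1) / 2)

lemma InvMeasure.quadratic_lower [Nonempty I] (h : InvMeasure ν r) {A' m' m'' s t : ℝ}
    (hg : ∀ᵐ x ∂ν, GoodMat A' r m' m'' s x) (ht : 0 < t) (hs : 0 ≤ s) (ha : 0 ≤ m'' - A')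
    (F : Matrix I R (EntryPoly I)) :
    (m' - t⁻¹ * s) * (pairing (conjPoly I) h.expect F F).re
      - (m'' - A' + t - t⁻¹ * s) * (pairing (conjPoly I) h.expect F (avgDiv unitDer F)).re
      - errConst r (m'' - A') s t * (((Fintype.card I : ℝ) ^ 2)⁻¹ * h.energy unitDer F)
      ≤ (pairing (conjPoly I) h.expect F (genMat I * F)).re := by
  have hGL := h.glAction
  set Ψ := avgDiv unitDer F with hΨ
  set Φ := F - Ψ with hΦ
  have hF : F = Φ + Ψ := by simp [hΦ]
  have hq := h.quadratic_expect hg ht Φ Ψ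
  rw [← hF] at hq
  have hcast : ((Fintype.card I : ℂ)⁻¹) ^ 2 = ((((Fintype.card I : ℝ) ^ 2)⁻¹ : ℝ) : ℂ) := by
    push_cast; rw [inv_pow]
  set e := ((Fintype.card I : ℝ) ^ 2)⁻¹ * h.energy unitDer F with he
  have hbound : ∀ (c : Matrix I I (EntryPoly I)) (C : ℝ), Spectral c → c.trace = 0 →
      (∀ᵐ x ∂ν, ‖evalMat x c‖ ≤ C) →
      |(pairing (conjPoly I) h.expect Φ (c * Φ)).re| ≤ (C ^ 2 + 1) / 2 * e := by
    intro c C hc htr hC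
    rw [pairing_complement hGL hc.equivariant htr F Φ hΦ, hcast, Complex.re_ofReal_mul, abs_mul,
      abs_of_nonneg (by positivity : (0 : ℝ) ≤ ((Fintype.card I : ℝ) ^ 2)⁻¹), he, mul_left_comm]
    exact mul_le_mul_of_nonneg_left
      (h.abs_resid_le _ c (boundedBy_of_spectral hc h.herm hC) F) (by positivity)
  have hY : ∀ᵐ x ∂ν, ‖evalMat x (centred (genMat I))‖ ≤ 2 * r := by
    filter_upwards [h.bdd] with x hx
    rw [evalMat_centred, evalMat_genMat]
    exact (norm_sub_ntr_le x).trans (by linarith)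
  have hY2 : ∀ᵐ x ∂ν,
      ‖evalMat x (centred (centred (genMat I) * centred (genMat I)))‖ ≤ 8 * r ^ 2 := by
    filter_upwards [hY] with x hx
    rw [evalMat_centred]
    refine (norm_sub_ntr_le _).trans ?_
    rw [evalMat_mul]
    have h1 := norm_mul_le (evalMat x (centred (genMat I))) (evalMat x (centred (genMat I)))
    have h2 := mul_le_mul hx hx (norm_nonneg _) ((norm_nonneg _).trans hx)
    nlinarith
  have b1 := hbound _ _ spectral_genMat.centred (trace_centred _) hY
  have b2 := hbound _ _ spectral_genMat.centred.sq.centred (trace_centred _) hY2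
  have b3 := h.abs_avgDiv_sub_le hGL F
  rw [← hΨ, ← he] at b3
  have hΦΦ : (pairing (conjPoly I) h.expect Φ Φ).re = (pairing (conjPoly I) h.expect F F).re
      - 2 * (pairing (conjPoly I) h.expect F Ψ).re + (pairing (conjPoly I) h.expect Ψ Ψ).re := by
    have := pairing_avgDiv_left hGL F
    rw [← hΨ] at this
    rw [hΦ, pairing_sub_left, pairing_sub_right, pairing_sub_right, this]
    simp only [Complex.sub_re]
    ring
  rw [hΦΦ] at hq
  rw [abs_le] at b1 b2 b3
  have ht' : 0 < t⁻¹ := inv_pos.2 ht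
  have c2 := mul_le_mul_of_nonneg_left b2.2 ht'.le
  have c3 := mul_le_mul_of_nonneg_left b3.2 (by linarith : 0 ≤ m'' - A' + t)
  have c4 := mul_le_mul_of_nonneg_left b3.2 (mul_nonneg ht'.le hs)
  simp only [errConst]
  nlinarith [b1.1]

end Quadratic

section Bipartite

set_option linter.unusedSectionVars false

open scoped Matrix.Norms.L2Operator

variable {ι J R : Type*} [Fintype ι] [DecidableEq ι] [Fintype J] [DecidableEq J] [Fintype R]

/-- The linear map `X ↦ n (1 ⊗ Tr₁ X) - X`. -/
def reduction {𝔓 : Type*} [CommRing 𝔓] (c : Matrix (ι × J) (ι × J) 𝔓) :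
    Matrix (ι × J) (ι × J) 𝔓 :=
  Matrix.of fun p q => Fintype.card ι * (if p.1 = q.1 then ∑ α, c (α, p.2) (α, q.2) else 0) - c p q

/-- The array `(n E_{γβ} F - δ_{βγ} F)` with additional column indices `β, γ`. -/
def spread {𝔓 : Type*} [CommRing 𝔓] (F : Matrix (ι × J) R 𝔓) : Matrix (ι × J) (R × ι × ι) 𝔓 :=
  Matrix.of fun p s => (if p.1 = s.2.2 then Fintype.card ι • F (s.2.1, p.2) s.1 else 0) -
    (if s.2.1 = s.2.2 then F p s.1 else 0)

lemma sum_spread {𝔓 : Type*} [CommRing 𝔓] (b : ι → ι → 𝔓 → 𝔓 → ℂ)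
    (hl : ∀ α α' p q u, b α α' (p + q) u = b α α' p u + b α α' q u)
    (hr : ∀ α α' u p q, b α α' u (p + q) = b α α' u p + b α α' u q) (f g : ι → 𝔓) :
    ∑ β, ∑ γ, ∑ α, ∑ α', b α α'
      ((if α = γ then Fintype.card ι • f β else 0) - (if β = γ then f α else 0))
      ((if α' = γ then Fintype.card ι • g β else 0) - (if β = γ then g α' else 0)) =
    (Fintype.card ι : ℂ) ^ 2 * ∑ β, ∑ α, b α α (f β) (g β) -
      Fintype.card ι * ∑ α, ∑ α', b α α' (f α) (g α') := by
  let B : ι → ι → 𝔓 →+ 𝔓 →+ ℂ := fun α α' =>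
    AddMonoidHom.mk' (fun p => AddMonoidHom.mk' (b α α' p) (hr α α' p))
      (fun p q => AddMonoidHom.ext fun u => hl α α' p q u)
  have hB : ∀ α α' p q, b α α' p q = B α α' p q := fun _ _ _ _ => rfl
  simp only [hB]
  clear_value B
  have h1 : ∀ β γ α α', B α α'
      ((if α = γ then Fintype.card ι • f β else 0) - (if β = γ then f α else 0))
      ((if α' = γ then Fintype.card ι • g β else 0) - (if β = γ then g α' else 0)) =
      (if α = γ then if α' = γ then (Fintype.card ι : ℂ) ^ 2 * B α α' (f β) (g β) else 0 else 0)
      - (if β = γ then if α = γ then (Fintype.card ι : ℂ) * B α α' (f β) (g α') else 0 else 0)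
      - (if β = γ then if α' = γ then (Fintype.card ι : ℂ) * B α α' (f α) (g β) else 0 else 0)
      + (if β = γ then B α α' (f α) (g α') else 0) := by
    intro β γ α α'
    split_ifs <;>
    simp only [map_sub, map_nsmul, AddMonoidHom.sub_apply, AddMonoidHom.nsmul_apply,
      map_zero, AddMonoidHom.zero_apply, smul_sub] <;> (try simp only [nsmul_eq_mul]) <;> ring
  simp only [h1, Finset.sum_add_distrib, Finset.sum_sub_distrib]
  have s1 : ∑ β, ∑ γ, ∑ α, ∑ α', (if α = γ then if α' = γ then
      (Fintype.card ι : ℂ) ^ 2 * B α α' (f β) (g β) else 0 else 0) =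
      (Fintype.card ι : ℂ) ^ 2 * ∑ β, ∑ α, B α α (f β) (g β) := by
    simp only [Finset.mul_sum]
    refine Finset.sum_congr rfl fun β _ => Finset.sum_congr rfl fun γ _ => ?_
    rw [Finset.sum_eq_single γ (by intro α _ hα; simp [hα]) (by simp),
      Finset.sum_eq_single γ (by intro α _ hα; simp [hα]) (by simp)]
    simp
  have s2 : ∑ β, ∑ γ, ∑ α, ∑ α', (if β = γ then if α = γ then
      (Fintype.card ι : ℂ) * B α α' (f β) (g α') else 0 else 0) =
      Fintype.card ι * ∑ α, ∑ α', B α α' (f α) (g α') := by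
    simp only [Finset.mul_sum]
    refine Finset.sum_congr rfl fun β _ => ?_
    rw [Finset.sum_eq_single β (by intro α _ hα; simp [hα.symm]) (by simp),
      Finset.sum_eq_single β (by intro α _ hα; simp [hα]) (by simp)]
    simp
  have s3 : ∑ β, ∑ γ, ∑ α, ∑ α', (if β = γ then if α' = γ then
      (Fintype.card ι : ℂ) * B α α' (f α) (g β) else 0 else 0) =
      Fintype.card ι * ∑ α, ∑ α', B α α' (f α) (g α') := by
    simp only [Finset.mul_sum]
    rw [Finset.sum_comm (f := fun α α' : ι => (Fintype.card ι : ℂ) * B α α' (f α) (g α'))]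
    refine Finset.sum_congr rfl fun β _ => ?_
    rw [Finset.sum_eq_single β (by intro α _ hα; simp [hα.symm]) (by simp)]
    refine Finset.sum_congr rfl fun α _ => ?_
    rw [Finset.sum_eq_single β (by intro α _ hα; simp [hα]) (by simp)]
    simp
  have s4 : ∑ β : ι, ∑ γ : ι, ∑ α, ∑ α', (if β = γ then B α α' (f α) (g α') else 0) =
      Fintype.card ι * ∑ α, ∑ α', B α α' (f α) (g α') := by
    have : ∀ β : ι, ∑ γ : ι, ∑ α, ∑ α', (if β = γ then B α α' (f α) (g α') else 0) =
        ∑ α, ∑ α', B α α' (f α) (g α') := by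
      intro β
      rw [Finset.sum_eq_single β (by intro γ _ hγ; simp [hγ.symm]) (by simp)]
      simp
    simp only [this, Finset.sum_const, Finset.card_univ, nsmul_eq_mul]
  rw [s1, s2, s3, s4]
  ring

/-- Rearrangement of an array, treating the first tensor factor as a column index. -/
def regroup {𝔓 : Type*} (F : Matrix (ι × J) R 𝔓) : Matrix J (R × ι) 𝔓 :=
  Matrix.of fun a s => F (s.2, a) s.1

/-- The derivations generated by the second tensor factor. -/
def partDer (ι : Type*) {J : Type*} [Fintype ι] [DecidableEq ι] [DecidableEq J] (a b : J) :
    Derivation ℂ (EntryPoly (ι × J)) (EntryPoly (ι × J)) :=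
  ∑ α : ι, unitDer (α, a) (α, b)

lemma partDer_apply (a b : J) (p : EntryPoly (ι × J)) :
    partDer ι a b p = ∑ α : ι, unitDer (α, a) (α, b) p := by
  simp [partDer, derivation_sum_apply]

lemma GLAction.partDer {E : EntryPoly (ι × J) →ₗ[ℂ] ℂ}
    (h : GLAction (conjPoly (ι × J)) E (unitDer (I := ι × J))) :
    GLAction (conjPoly (ι × J)) E (partDer ι (J := J)) where
  adj a b p q := by
    simp only [partDer_apply, map_sum, Finset.sum_mul, Finset.mul_sum, h.adj]
  comm a b l k p := by
    have key : ∀ α β : ι, unitDer (α, a) (α, b) (unitDer (β, l) (β, k) p) =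
        unitDer (β, l) (β, k) (unitDer (α, a) (α, b) p) -
          (if (α, b) = (β, l) then unitDer (α, a) (β, k) p else 0) +
          (if (α, a) = (β, k) then unitDer (β, l) (α, b) p else 0) :=
      fun α β => unitDer_comm _ _ _ _ p
    have e1 : ∀ β : ι, (∑ α : ι, if (α, b) = (β, l) then unitDer (α, a) (β, k) p else 0) =
        if b = l then unitDer (β, a) (β, k) p else 0 := by
      intro β
      rw [Finset.sum_eq_single β (by intro α _ hα; simp [hα]) (by simp)]
      simp
    have e2 : ∀ β : ι, (∑ α : ι, if (α, a) = (β, k) then unitDer (β, l) (α, b) p else 0) =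
        if a = k then unitDer (β, l) (β, b) p else 0 := by
      intro β
      rw [Finset.sum_eq_single β (by intro α _ hα; simp [hα]) (by simp)]
      simp
    simp only [partDer_apply, map_sum]
    simp only [key, Finset.sum_add_distrib, Finset.sum_sub_distrib, e1, e2]
    rw [Finset.sum_comm]
    split_ifs <;> simp
  trace p := by
    have := unitDer_trace_zero (I := ι × J) p
    rw [Fintype.sum_prod_type, Finset.sum_comm] at this
    simpa only [partDer_apply] using this
  conj_smul := conjPoly_smul

variable {E : EntryPoly (ι × J) →ₗ[ℂ] ℂ}

lemma pairing_regroup (G F : Matrix (ι × J) R (EntryPoly (ι × J))) :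
    pairing (conjPoly (ι × J)) E (regroup G) (regroup F) = pairing (conjPoly (ι × J)) E G F := by
  simp only [pairing, regroup, Matrix.of_apply, Fintype.sum_prod_type]

lemma pairing_spread_self (F : Matrix (ι × J) R (EntryPoly (ι × J))) :
    pairing (conjPoly (ι × J)) E (spread F) (spread F) =
      Fintype.card ι * ((Fintype.card ι : ℂ) ^ 2 - 1) * pairing (conjPoly (ι × J)) E F F := by
  have key := fun (s : R) (a : J) => sum_spread
    (fun α α' (p q : EntryPoly (ι × J)) => if α = α' then E (conjPoly (ι × J) p * q) else 0)
    (by intro α α' p q u; split_ifs <;> simp [add_mul])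
    (by intro α α' p q u; split_ifs <;> simp [mul_add])
    (fun α => F (α, a) s) (fun α => F (α, a) s)
  simp only [Finset.sum_ite_eq, Finset.mem_univ, if_true] at key
  have h2 : pairing (conjPoly (ι × J)) E (spread F) (spread F) = ∑ s, ∑ a, ∑ β, ∑ γ, ∑ α,
      E (conjPoly (ι × J) (spread F (α, a) (s, β, γ)) * spread F (α, a) (s, β, γ)) := by
    simp only [pairing, Fintype.sum_prod_type]
    refine Finset.sum_congr rfl fun s _ => ?_
    rw [Finset.sum_congr rfl fun β _ => Finset.sum_congr rfl fun γ _ => Finset.sum_comm]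
    rw [Finset.sum_congr rfl fun β _ => Finset.sum_comm, Finset.sum_comm]
  rw [h2]
  simp only [spread, Matrix.of_apply, key]
  simp only [pairing, Fintype.sum_prod_type, Finset.sum_const, Finset.card_univ, nsmul_eq_mul,
    Finset.mul_sum, ← Finset.sum_sub_distrib]
  refine Finset.sum_congr rfl fun s _ => ?_
  rw [Finset.sum_comm]
  refine Finset.sum_congr rfl fun α _ => Finset.sum_congr rfl fun a _ => ?_
  ring

lemma map_mul_reduction_apply (c : Matrix (ι × J) (ι × J) (EntryPoly (ι × J)))
    (F : Matrix (ι × J) R (EntryPoly (ι × J))) (u : EntryPoly (ι × J)) (s : R) (β : ι) (a : J) :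
    E (u * (reduction c * F) (β, a) s) =
      ∑ a', ((Fintype.card ι : ℂ) * ∑ α, E (u * (c (α, a) (α, a') * F (β, a') s)) -
        ∑ α', E (u * (c (β, a) (α', a') * F (α', a') s))) := by
  rw [Matrix.mul_apply, Fintype.sum_prod_type, Finset.sum_comm, Finset.mul_sum, map_sum]
  refine Finset.sum_congr rfl fun a' _ => ?_
  have h1 : u * ∑ α, reduction c (β, a) (α, a') * F (α, a') s =
      (Fintype.card ι : ℂ) • ∑ α, u * (c (α, a) (α, a') * F (β, a') s) -
        ∑ α', u * (c (β, a) (α', a') * F (α', a') s) := by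
    simp only [reduction, Matrix.of_apply, sub_mul, Finset.sum_sub_distrib, mul_sub]
    rw [← Finset.mul_sum, ← Finset.mul_sum, ← Finset.sum_mul]
    congr 1
    rw [Finset.sum_eq_single β (by intro γ _ hγ; simp [hγ.symm]) (by simp), if_pos rfl,
      Algebra.smul_def, map_natCast]
    ring
  rw [h1, map_sub, map_smul, map_sum, map_sum, smul_eq_mul]

set_option maxHeartbeats 1000000 in
lemma pairing_spread_mul (c : Matrix (ι × J) (ι × J) (EntryPoly (ι × J)))
    (F : Matrix (ι × J) R (EntryPoly (ι × J))) :
    pairing (conjPoly (ι × J)) E (spread F) (c * spread F) =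
      Fintype.card ι * pairing (conjPoly (ι × J)) E F (reduction c * F) := by
  have key := fun (s : R) (a a' : J) => sum_spread
    (fun α α' (p q : EntryPoly (ι × J)) =>
      E (conjPoly (ι × J) p * (c (α, a) (α', a') * q)))
    (by intro α α' p q u; simp [add_mul])
    (by intro α α' p q u; simp [mul_add])
    (fun α => F (α, a) s) (fun α => F (α, a') s)
  have h2 : pairing (conjPoly (ι × J)) E (spread F) (c * spread F) =
      ∑ s, ∑ a, ∑ a', ∑ β, ∑ γ, ∑ α, ∑ α', E (conjPoly (ι × J) (spread F (α, a) (s, β, γ)) *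
        (c (α, a) (α', a') * spread F (α', a') (s, β, γ))) := by
    simp only [pairing, Matrix.mul_apply, Fintype.sum_prod_type, Finset.mul_sum, map_sum]
    refine Finset.sum_congr rfl fun s _ => ?_
    rw [Finset.sum_congr rfl fun β _ => Finset.sum_congr rfl fun γ _ => Finset.sum_comm]
    rw [Finset.sum_congr rfl fun β _ => Finset.sum_comm, Finset.sum_comm]
    refine Finset.sum_congr rfl fun a _ => ?_
    rw [Finset.sum_congr rfl fun β _ => Finset.sum_congr rfl fun γ _ =>
      Finset.sum_congr rfl fun α _ => Finset.sum_comm]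
    rw [Finset.sum_congr rfl fun β _ => Finset.sum_congr rfl fun γ _ => Finset.sum_comm]
    rw [Finset.sum_congr rfl fun β _ => Finset.sum_comm, Finset.sum_comm]
  have h3 : pairing (conjPoly (ι × J)) E F (reduction c * F) = ∑ s, ∑ a, ∑ a',
      ((Fintype.card ι : ℂ) * ∑ β, ∑ α,
        E (conjPoly (ι × J) (F (β, a) s) * (c (α, a) (α, a') * F (β, a') s)) -
      ∑ α, ∑ α', E (conjPoly (ι × J) (F (α, a) s) * (c (α, a) (α', a') * F (α', a') s))) := by
    simp only [pairing, Fintype.sum_prod_type, map_mul_reduction_apply]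
    refine Finset.sum_congr rfl fun s _ => ?_
    rw [Finset.sum_comm]
    refine Finset.sum_congr rfl fun a _ => ?_
    rw [Finset.sum_comm]
    refine Finset.sum_congr rfl fun a' _ => ?_
    rw [Finset.sum_sub_distrib, Finset.mul_sum]
  rw [h2, h3]
  simp only [spread, Matrix.of_apply, key]
  rw [Finset.mul_sum]
  refine Finset.sum_congr rfl fun s _ => ?_
  rw [Finset.mul_sum]
  refine Finset.sum_congr rfl fun a _ => ?_
  rw [Finset.mul_sum]
  refine Finset.sum_congr rfl fun a' _ => ?_
  ring

lemma pairing_spread_divOp (F : Matrix (ι × J) R (EntryPoly (ι × J))) :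
    pairing (conjPoly (ι × J)) E (spread F) (divOp unitDer (spread F)) =
      (Fintype.card ι : ℂ) ^ 2 *
        pairing (conjPoly (ι × J)) E (regroup F) (divOp (partDer ι) (regroup F)) -
      Fintype.card ι * pairing (conjPoly (ι × J)) E F (divOp unitDer F) := by
  have key := fun (s : R) (a a' : J) => sum_spread
    (fun α α' (p q : EntryPoly (ι × J)) =>
      E (conjPoly (ι × J) p * (unitDer (α', a') (α, a) q)))
    (by intro α α' p q u; simp [add_mul])
    (by intro α α' p q u; simp [mul_add])
    (fun α => F (α, a) s) (fun α => F (α, a') s)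
  have h2 : pairing (conjPoly (ι × J)) E (spread F) (divOp unitDer (spread F)) =
      ∑ s, ∑ a, ∑ a', ∑ β, ∑ γ, ∑ α, ∑ α', E (conjPoly (ι × J) (spread F (α, a) (s, β, γ)) *
        (unitDer (α', a') (α, a) (spread F (α', a') (s, β, γ)))) := by
    simp only [pairing, divOp, Matrix.of_apply, Fintype.sum_prod_type, Finset.mul_sum, map_sum]
    refine Finset.sum_congr rfl fun s _ => ?_
    rw [Finset.sum_congr rfl fun β _ => Finset.sum_congr rfl fun γ _ => Finset.sum_comm]
    rw [Finset.sum_congr rfl fun β _ => Finset.sum_comm, Finset.sum_comm]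
    refine Finset.sum_congr rfl fun a _ => ?_
    rw [Finset.sum_congr rfl fun β _ => Finset.sum_congr rfl fun γ _ =>
      Finset.sum_congr rfl fun α _ => Finset.sum_comm]
    rw [Finset.sum_congr rfl fun β _ => Finset.sum_congr rfl fun γ _ => Finset.sum_comm]
    rw [Finset.sum_congr rfl fun β _ => Finset.sum_comm, Finset.sum_comm]
  have h3 : pairing (conjPoly (ι × J)) E F (divOp unitDer F) = ∑ s, ∑ a, ∑ a', ∑ α, ∑ α',
      E (conjPoly (ι × J) (F (α, a) s) * (unitDer (α', a') (α, a) (F (α', a') s))) := by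
    simp only [pairing, divOp, Matrix.of_apply, Fintype.sum_prod_type, Finset.mul_sum, map_sum]
    refine Finset.sum_congr rfl fun s _ => ?_
    rw [Finset.sum_comm]
    refine Finset.sum_congr rfl fun a _ => ?_
    rw [Finset.sum_congr rfl fun α _ => Finset.sum_comm, Finset.sum_comm]
  have h4 : pairing (conjPoly (ι × J)) E (regroup F) (divOp (partDer ι) (regroup F)) =
      ∑ s, ∑ a, ∑ a', ∑ β, ∑ α,
      E (conjPoly (ι × J) (F (β, a) s) * (unitDer (α, a') (α, a) (F (β, a') s))) := by
    simp only [pairing, divOp, regroup, partDer_apply, Matrix.of_apply, Fintype.sum_prod_type,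
      Finset.mul_sum, map_sum]
    refine Finset.sum_congr rfl fun s _ => ?_
    rw [Finset.sum_comm]
    refine Finset.sum_congr rfl fun a _ => ?_
    rw [Finset.sum_comm]
  rw [h2, h3, h4]
  simp only [spread, Matrix.of_apply, key]
  simp only [Finset.sum_sub_distrib, ← Finset.mul_sum]

lemma unitDer_spread (i j p : ι × J) (s : R × ι × ι) (F : Matrix (ι × J) R (EntryPoly (ι × J))) :
    unitDer i j (spread F p s) = spread (F.map (unitDer i j)) p s := by
  simp only [spread, Matrix.of_apply, map_sub, apply_ite (unitDer i j), map_nsmul, map_zero,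
    Matrix.map_apply]

variable {ν : Measure (Matrix (ι × J) (ι × J) ℂ)} [IsFiniteMeasure ν] {r : ℝ}

lemma InvMeasure.energy_eq (h : InvMeasure ν r) (F : Matrix (ι × J) R (EntryPoly (ι × J))) :
    h.energy unitDer F = ∑ i, ∑ j,
      (pairing (conjPoly (ι × J)) h.expect (F.map (unitDer i j)) (F.map (unitDer i j))).re := by
  simp only [InvMeasure.energy, pairing, Complex.re_sum, InvMeasure.meanSq, Matrix.map_apply]
  rw [Finset.sum_congr rfl fun s _ => Finset.sum_comm, Finset.sum_comm]
  refine Finset.sum_congr rfl fun i _ => ?_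
  rw [Finset.sum_congr rfl fun s _ => Finset.sum_comm, Finset.sum_comm]

lemma InvMeasure.energy_spread (h : InvMeasure ν r) (F : Matrix (ι × J) R (EntryPoly (ι × J))) :
    h.energy unitDer (spread F) =
      Fintype.card ι * ((Fintype.card ι : ℝ) ^ 2 - 1) * h.energy unitDer F := by
  rw [h.energy_eq, h.energy_eq]
  have h1 : ∀ i j, (spread F).map (unitDer i j) = spread (F.map (unitDer i j)) := by
    intro i j
    ext p s : 2
    rw [Matrix.map_apply, unitDer_spread]
  simp only [h1, pairing_spread_self, Finset.mul_sum]
  refine Finset.sum_congr rfl fun i _ => Finset.sum_congr rfl fun j _ => ?_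
  rw [← Complex.re_ofReal_mul]
  push_cast
  rfl

lemma InvMeasure.meanSq_sum_le {κ I : Type*} [Fintype κ] [Fintype I] [DecidableEq I]
    {ν : Measure (Matrix I I ℂ)} [IsFiniteMeasure ν] (h : InvMeasure ν r) (p : κ → EntryPoly I) :
    h.meanSq (∑ k, p k) ≤ Fintype.card κ * ∑ k, h.meanSq (p k) := by
  have h1 : h.meanSq (∑ k, p k) = ∑ k, ∑ l, (h.expect (conjPoly I (p k) * p l)).re := by
    simp only [InvMeasure.meanSq, map_sum, Finset.sum_mul, Finset.mul_sum, Complex.re_sum]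
    rw [Finset.sum_comm]
  rw [h1]
  calc _ ≤ ∑ k, ∑ l, (h.meanSq (p k) + h.meanSq (p l)) / 2 :=
        Finset.sum_le_sum fun k _ => Finset.sum_le_sum fun l _ =>
          (le_abs_self _).trans (h.abs_expect_re_le _ _)
    _ = _ := by
        simp only [← Finset.sum_div, Finset.sum_add_distrib, Finset.sum_const, Finset.card_univ,
          nsmul_eq_mul, ← Finset.mul_sum]
        ring

lemma InvMeasure.energy_regroup_le (h : InvMeasure ν r)
    (F : Matrix (ι × J) R (EntryPoly (ι × J))) :
    h.energy (partDer ι) (regroup F) ≤ Fintype.card ι * h.energy unitDer F := by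
  simp only [InvMeasure.energy, Fintype.sum_prod_type, regroup, Matrix.of_apply, Finset.mul_sum]
  refine Finset.sum_le_sum fun s _ => Finset.sum_le_sum fun β _ => Finset.sum_le_sum fun a' _ => ?_
  have h1 : ∀ a b, h.meanSq (partDer ι a b (F (β, a') s)) ≤
      Fintype.card ι * ∑ α : ι, h.meanSq (unitDer (α, a) (α, b) (F (β, a') s)) := by
    intro a b
    rw [partDer_apply]
    exact h.meanSq_sum_le _
  refine (Finset.sum_le_sum fun a _ => Finset.sum_le_sum fun b _ => h1 a b).trans ?_
  simp only [← Finset.mul_sum]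
  refine mul_le_mul_of_nonneg_left ?_ (by positivity)
  rw [Finset.sum_congr rfl fun a _ => Finset.sum_comm, Finset.sum_comm]
  refine Finset.sum_le_sum fun α _ => Finset.sum_le_sum fun a _ => ?_
  exact Finset.single_le_sum (f := fun α' => ∑ b, h.meanSq (unitDer (α, a) (α', b) (F (β, a') s)))
    (fun α' _ => Finset.sum_nonneg fun b _ => h.meanSq_nonneg _) (Finset.mem_univ α)

end Bipartite

section LowerBound

set_option linter.unusedSectionVars false

open scoped Matrix.Norms.L2Operator

variable {ι J R : Type*} [Fintype ι] [DecidableEq ι] [Fintype J] [DecidableEq J] [Fintype R]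
  {ν : Measure (Matrix (ι × J) (ι × J) ℂ)} [IsFiniteMeasure ν] {r : ℝ}

lemma pairing_spread_avgDiv [Nonempty ι] [Nonempty J] {E : EntryPoly (ι × J) →ₗ[ℂ] ℂ}
    (F : Matrix (ι × J) R (EntryPoly (ι × J))) :
    pairing (conjPoly (ι × J)) E (spread F) (avgDiv unitDer (spread F)) =
      ((Fintype.card ι : ℝ) : ℂ) *
        (pairing (conjPoly (ι × J)) E (regroup F) (avgDiv (partDer ι) (regroup F)) -
          pairing (conjPoly (ι × J)) E F (avgDiv unitDer F)) := by
  have h1 : (Fintype.card ι : ℂ) ≠ 0 := Nat.cast_ne_zero.mpr Fintype.card_ne_zero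
  have h2 : (Fintype.card J : ℂ) ≠ 0 := Nat.cast_ne_zero.mpr Fintype.card_ne_zero
  simp only [avgDiv, pairing_smul_right, pairing_spread_divOp, Fintype.card_prod]
  push_cast
  field_simp

/-- The error constant of `InvMeasure.reduction_lower`. -/
def errConst' (k r a s t : ℝ) : ℝ :=
  errConst r a s t * (k ^ 2 - 1) + (a + t - t⁻¹ * s) * (k + 1)

/-- A lower bound for the quadratic form of `n (1 ⊗ Tr₁ X) - X` in expectation. -/
lemma InvMeasure.reduction_lower [Nonempty ι] [Nonempty J] (h : InvMeasure ν r)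
    {A' m' m'' s t : ℝ} (hg : ∀ᵐ x ∂ν, GoodMat A' r m' m'' s x) (ht : 0 < t) (hs : 0 ≤ s)
    (ha : 0 ≤ m'' - A') (hw : 0 ≤ m'' - A' + t - t⁻¹ * s)
    (F : Matrix (ι × J) R (EntryPoly (ι × J))) :
    (((Fintype.card ι : ℝ) ^ 2 - 1) * m' - (m'' - A' + t)
        - ((Fintype.card ι : ℝ) ^ 2 - 2) * (t⁻¹ * s)) *
        (pairing (conjPoly (ι × J)) h.expect F F).re
      - errConst' (Fintype.card ι) r (m'' - A') s t *
        (((Fintype.card J : ℝ) ^ 2)⁻¹ * h.energy unitDer F)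
      ≤ (pairing (conjPoly (ι × J)) h.expect F (reduction (genMat (ι × J)) * F)).re := by
  have hGL := h.glAction
  have hGL2 := hGL.partDer
  have hn1 : (1 : ℝ) ≤ Fintype.card ι := by exact_mod_cast Fintype.card_pos
  have hd1 : (1 : ℝ) ≤ Fintype.card J := by exact_mod_cast Fintype.card_pos
  have hq := h.quadratic_lower hg ht hs ha (spread F)
  rw [pairing_spread_self, pairing_spread_mul, pairing_spread_avgDiv, h.energy_spread] at hq
  have c1 : (Fintype.card ι : ℂ) * ((Fintype.card ι : ℂ) ^ 2 - 1) =
    ((Fintype.card ι * ((Fintype.card ι : ℝ) ^ 2 - 1) : ℝ) : ℂ) := by push_cast; ring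
  have c2 : (Fintype.card ι : ℂ) = ((Fintype.card ι : ℝ) : ℂ) := by push_cast; ring
  rw [c1, c2, Complex.re_ofReal_mul, Complex.re_ofReal_mul, Complex.re_ofReal_mul,
    Complex.sub_re] at hq
  have hS := abs_le.mp (h.abs_avgDiv_sub_le hGL F)
  have hSd := abs_le.mp (h.abs_avgDiv_sub_le hGL2 (regroup F))
  have hS0 := h.re_pairing_self_nonneg (avgDiv unitDer F)
  have hSd0 := h.re_pairing_self_nonneg (regroup F - avgDiv (partDer ι) (regroup F))
  rw [pairing_sub_left, pairing_sub_right, pairing_sub_right, pairing_avgDiv_left hGL2,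
    pairing_regroup] at hSd0
  simp only [Complex.sub_re] at hSd0
  have hE := h.energy_regroup_le F
  have hE0 := h.energy_nonneg unitDer F
  have hP0 := h.re_pairing_self_nonneg F
  have herr : 0 ≤ errConst r (m'' - A') s t := by
    unfold errConst
    positivity
  rw [errConst', Fintype.card_prod] at *
  push_cast at *
  set P := (pairing (conjPoly (ι × J)) h.expect F F).re
  set S := (pairing (conjPoly (ι × J)) h.expect F (avgDiv unitDer F)).re
  set Sd := (pairing (conjPoly (ι × J)) h.expect (regroup F) (avgDiv (partDer ι) (regroup F))).re
  set L := (pairing (conjPoly (ι × J)) h.expect F (reduction (genMat (ι × J)) * F)).re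
  set En := h.energy unitDer F
  set k : ℝ := (Fintype.card ι : ℝ)
  set d : ℝ := (Fintype.card J : ℝ)
  have hdi : 0 ≤ (d ^ 2)⁻¹ := by positivity
  have hNd : ((k * d) ^ 2)⁻¹ ≤ (d ^ 2)⁻¹ := by
    apply inv_anti₀ (by positivity)
    nlinarith [mul_le_mul hn1 le_rfl (by positivity : 0 ≤ d) (by positivity : 0 ≤ k)]
  have hNe : ((k * d) ^ 2)⁻¹ * En ≤ (d ^ 2)⁻¹ * En := mul_le_mul_of_nonneg_right hNd hE0
  have hS1 : -((d ^ 2)⁻¹ * En) ≤ S := by linarith [hS.1, hS.2]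
  have hSd1 : Sd ≤ P + k * ((d ^ 2)⁻¹ * En) := by
    have := mul_le_mul_of_nonneg_left hE hdi
    nlinarith [hSd.1, hSd.2]
  have hk0 : 0 < k := by linarith
  have hT : 0 ≤ k ^ 2 - 1 := by nlinarith
  have hq' : (m' - t⁻¹ * s) * ((k ^ 2 - 1) * P) - (m'' - A' + t - t⁻¹ * s) * (Sd - S)
      - errConst r (m'' - A') s t * (((k * d) ^ 2)⁻¹ * ((k ^ 2 - 1) * En)) ≤ L := by
    refine le_of_mul_le_mul_left ?_ hk0
    refine le_trans (le_of_eq ?_) hq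
    ring
  have e1 : (m'' - A' + t - t⁻¹ * s) * (Sd - S) ≤
      (m'' - A' + t - t⁻¹ * s) * (P + k * ((d ^ 2)⁻¹ * En) + (d ^ 2)⁻¹ * En) :=
    mul_le_mul_of_nonneg_left (by linarith) hw
  have e2 : errConst r (m'' - A') s t * (((k * d) ^ 2)⁻¹ * ((k ^ 2 - 1) * En)) ≤
      errConst r (m'' - A') s t * ((k ^ 2 - 1) * ((d ^ 2)⁻¹ * En)) := by
    refine mul_le_mul_of_nonneg_left ?_ herr
    rw [mul_left_comm]
    exact mul_le_mul_of_nonneg_left hNe hT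
  nlinarith [hq', e1, e2]

end LowerBound

section HilbertSchmidt

set_option linter.unusedSectionVars false

open scoped Matrix.Norms.L2Operator

variable {I J K : Type*} [Fintype I] [DecidableEq I] [Fintype J] [Fintype K]

/-- The squared Hilbert-Schmidt norm. -/
def hsSq (Y : Matrix J K ℂ) : ℝ := ∑ i, ∑ k, ‖Y i k‖ ^ 2

lemma hsSq_nonneg (Y : Matrix J K ℂ) : 0 ≤ hsSq Y :=
  Finset.sum_nonneg fun _ _ => Finset.sum_nonneg fun _ _ => by positivity

lemma hsSq_eq_trace (Y : Matrix J K ℂ) : hsSq Y = (Yᴴ * Y).trace.re := by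
  simp only [hsSq, Matrix.trace, Matrix.diag_apply, Matrix.mul_apply, Matrix.conjTranspose_apply,
    Complex.re_sum, re_star_mul_self]
  rw [Finset.sum_comm]

lemma hsSq_conjTranspose (Y : Matrix J K ℂ) : hsSq Yᴴ = hsSq Y := by
  simp only [hsSq, Matrix.conjTranspose_apply, norm_star]
  rw [Finset.sum_comm]

lemma hsSq_mul_le_left (a : Matrix I I ℂ) (Y : Matrix I K ℂ) :
    hsSq (a * Y) ≤ ‖a‖ ^ 2 * hsSq Y := by
  simp only [hsSq, Matrix.mul_apply]
  rw [Finset.sum_comm, Finset.sum_comm (f := fun i k => ‖Y i k‖ ^ 2), Finset.mul_sum]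
  exact Finset.sum_le_sum fun k _ => sum_norm_mulVec_le a _

lemma hsSq_mul_le_right (Y : Matrix K I ℂ) (a : Matrix I I ℂ) :
    hsSq (Y * a) ≤ ‖a‖ ^ 2 * hsSq Y := by
  have h := hsSq_mul_le_left aᴴ Yᴴ
  rwa [← Matrix.conjTranspose_mul, hsSq_conjTranspose, hsSq_conjTranspose,
    Matrix.l2_opNorm_conjTranspose] at h

lemma hsSq_sum_le {κ : Type*} (s : Finset κ) (Y : κ → Matrix J K ℂ) :
    hsSq (∑ k ∈ s, Y k) ≤ s.card * ∑ k ∈ s, hsSq (Y k) := by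
  have h1 : ∀ i j, ‖(∑ k ∈ s, Y k) i j‖ ^ 2 ≤ s.card * ∑ k ∈ s, ‖Y k i j‖ ^ 2 := by
    intro i j
    rw [Matrix.sum_apply]
    exact (pow_le_pow_left₀ (norm_nonneg _) (norm_sum_le _ _) 2).trans sq_sum_le_card_mul_sum_sq
  refine (Finset.sum_le_sum fun i _ => Finset.sum_le_sum fun j _ => h1 i j).trans (le_of_eq ?_)
  simp only [hsSq, ← Finset.mul_sum]
  rw [Finset.sum_congr rfl fun i _ => Finset.sum_comm, Finset.sum_comm]

lemma sum_hsSq_single (P Q : Matrix I I ℂ) :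
    ∑ i, ∑ j, hsSq (P * Matrix.single i j 1 * Q) = hsSq P * hsSq Q := by
  have h1 : ∀ i j a b, (P * Matrix.single i j (1 : ℂ) * Q) a b = P a i * Q j b := by
    intro i j a b
    rw [Matrix.mul_apply, Finset.sum_eq_single j]
    · simp
    · intro k _ hk
      rw [Matrix.mul_single_apply_of_ne _ _ _ _ _ hk, zero_mul]
    · simp
  simp only [hsSq, h1, norm_mul, mul_pow, Finset.sum_mul]
  rw [Finset.sum_congr rfl fun i _ => Finset.sum_comm, Finset.sum_comm]
  refine Finset.sum_congr rfl fun a _ => ?_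
  simp only [← Finset.mul_sum, ← Finset.sum_mul]

/-- Summing over all matrix units the squared norms of the values of an elementary operator. -/
lemma sum_hsSq_elementary_le {κ : Type*} [Fintype κ] {a b : κ → Matrix I I ℂ} {α β : ℝ}
    (ha : ∀ k, ‖a k‖ ≤ α) (hb : ∀ k, ‖b k‖ ≤ β) (P Q : Matrix I I ℂ) :
    ∑ i, ∑ j, hsSq (P * (∑ k, a k * Matrix.single i j 1 * b k) * Q) ≤
      (Fintype.card κ * (α * β)) ^ 2 * (hsSq P * hsSq Q) := by
  have h1 : ∀ i j, hsSq (P * (∑ k, a k * Matrix.single i j 1 * b k) * Q) ≤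
      Fintype.card κ * ∑ k, hsSq ((P * a k) * Matrix.single i j 1 * (b k * Q)) := by
    intro i j
    have : P * (∑ k, a k * Matrix.single i j 1 * b k) * Q =
        ∑ k, (P * a k) * Matrix.single i j 1 * (b k * Q) := by
      simp only [Finset.mul_sum, Finset.sum_mul, Matrix.mul_assoc]
    rw [this]
    exact hsSq_sum_le _ _
  refine (Finset.sum_le_sum fun i _ => Finset.sum_le_sum fun j _ => h1 i j).trans ?_
  simp only [← Finset.mul_sum]
  rw [Finset.sum_congr rfl fun i _ => Finset.sum_comm, Finset.sum_comm]
  simp only [sum_hsSq_single]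
  have h2 : ∀ k, hsSq (P * a k) * hsSq (b k * Q) ≤ (α * β) ^ 2 * (hsSq P * hsSq Q) := by
    intro k
    have e1 : hsSq (P * a k) ≤ α ^ 2 * hsSq P := (hsSq_mul_le_right _ _).trans
      (mul_le_mul_of_nonneg_right (pow_le_pow_left₀ (norm_nonneg _) (ha k) 2) (hsSq_nonneg _))
    have e2 : hsSq (b k * Q) ≤ β ^ 2 * hsSq Q := (hsSq_mul_le_left _ _).trans
      (mul_le_mul_of_nonneg_right (pow_le_pow_left₀ (norm_nonneg _) (hb k) 2) (hsSq_nonneg _))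
    refine (mul_le_mul e1 e2 (hsSq_nonneg _) ((hsSq_nonneg _).trans e1)).trans (le_of_eq ?_)
    ring
  refine (mul_le_mul_of_nonneg_left (Finset.sum_le_sum fun k _ => h2 k) (by positivity)).trans
    (le_of_eq ?_)
  rw [Finset.sum_const, Finset.card_univ, nsmul_eq_mul]
  ring

lemma trace_pow_eq_sum_eigenvalues {m : Matrix I I ℂ} (hm : m.IsHermitian) (k : ℕ) :
    (m ^ k).trace = ∑ i, (hm.eigenvalues i : ℂ) ^ k := by
  conv_lhs => rw [hm.spectral_theorem, ← map_pow, Unitary.conjStarAlgAut_apply, Matrix.trace_mul_cycle]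
  rw [Matrix.diagonal_pow]
  simp [Matrix.trace]

lemma posSemidef_smul_add_iff {m : Matrix I I ℂ} (hm : m.IsHermitian) (e c : ℝ) :
    ((e : ℂ) • m + (c : ℂ) • (1 : Matrix I I ℂ)).PosSemidef ↔
      ∀ i, 0 ≤ e * hm.eigenvalues i + c := by
  have h1 : (e : ℂ) • m + (c : ℂ) • (1 : Matrix I I ℂ) =
      (hm.eigenvectorUnitary : Matrix I I ℂ) *
        Matrix.diagonal (fun i => ((e * hm.eigenvalues i + c : ℝ) : ℂ)) *
        star (hm.eigenvectorUnitary : Matrix I I ℂ) := by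
    have h2 : Matrix.diagonal (fun i => ((e * hm.eigenvalues i + c : ℝ) : ℂ)) =
        (e : ℂ) • Matrix.diagonal (RCLike.ofReal ∘ hm.eigenvalues) +
          (c : ℂ) • (1 : Matrix I I ℂ) := by
      ext i j
      by_cases hij : i = j <;> simp [hij]
    have h3 := hm.spectral_theorem
    rw [Unitary.conjStarAlgAut_apply] at h3
    rw [h2, Matrix.mul_add, Matrix.add_mul, Matrix.mul_smul, Matrix.smul_mul, ← h3, Matrix.mul_smul,
      Matrix.smul_mul, Matrix.mul_one, Unitary.mul_star_self_of_mem hm.eigenvectorUnitary.2]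
  rw [h1, Matrix.IsUnit.posSemidef_star_right_conjugate_iff
    (Unitary.isUnit_coe), Matrix.posSemidef_diagonal_iff]
  simp only [Complex.zero_le_real]

lemma hsSq_pow {m : Matrix I I ℂ} (hm : m.IsHermitian) (k : ℕ) :
    hsSq (m ^ k) = ∑ i, hm.eigenvalues i ^ (2 * k) := by
  rw [hsSq_eq_trace, (hm.pow k).eq, ← pow_add, ← two_mul, trace_pow_eq_sum_eigenvalues hm]
  norm_cast

lemma hsSq_pow_mul_le {m : Matrix I I ℂ} (hm : m.IsHermitian) (h1 : ∀ i, 1 ≤ hm.eigenvalues i)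
    {k l q : ℕ} (hq : k + l ≤ q) :
    hsSq (m ^ k) * hsSq (m ^ l) ≤ Fintype.card I * hsSq (m ^ q) := by
  simp only [hsSq_pow hm]
  have hmono : ∀ k : ℕ, ∀ i j, hm.eigenvalues i ≤ hm.eigenvalues j →
      hm.eigenvalues i ^ k ≤ hm.eigenvalues j ^ k := fun k i j hij =>
    pow_le_pow_left₀ (zero_le_one.trans (h1 i)) hij k
  have h2 : MonovaryOn (fun i => hm.eigenvalues i ^ (2 * k)) (fun i => hm.eigenvalues i ^ (2 * l))
      ((Finset.univ : Finset I) : Set I) := by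
    intro i _ j _ hij
    refine hmono _ _ _ (le_of_not_gt fun hlt => ?_)
    exact absurd (hmono (2 * l) j i hlt.le) (not_le.mpr hij)
  refine h2.sum_mul_sum_le_card_mul_sum.trans ?_
  rw [Finset.card_univ]
  refine mul_le_mul_of_nonneg_left (Finset.sum_le_sum fun i _ => ?_) (by positivity)
  rw [← pow_add]
  exact pow_le_pow_right₀ (h1 i) (by omega)

end HilbertSchmidt

section EnergyOfPowers

set_option linter.unusedSectionVars false

open scoped Matrix.Norms.L2Operator

variable {ι J : Type*} [Fintype ι] [DecidableEq ι] [Fintype J] [DecidableEq J]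

lemma norm_single_kronecker_one_le (β γ : ι) :
    ‖Matrix.single β γ (1 : ℂ) ⊗ₖ (1 : Matrix J J ℂ)‖ ≤ 1 := by
  set U := Matrix.single β γ (1 : ℂ) ⊗ₖ (1 : Matrix J J ℂ) with hU
  have h1 : Uᴴ * U = Matrix.diagonal fun p : ι × J => if p.1 = γ then (1 : ℂ) else 0 := by
    rw [hU, Matrix.conjTranspose_kronecker, ← Matrix.mul_kronecker_mul]
    ext ⟨p, a⟩ ⟨q, b⟩
    simp only [Matrix.conjTranspose_single, star_one, Matrix.single_mul_single_same, mul_one,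
      Matrix.conjTranspose_one, Matrix.kroneckerMap_apply, Matrix.single_apply, Matrix.one_apply,
      Matrix.diagonal_apply, Prod.mk.injEq]
    by_cases h1 : γ = p <;> by_cases h2 : p = q <;> by_cases h3 : a = b <;> simp_all [eq_comm]
  have h2 : ‖U‖ * ‖U‖ ≤ 1 := by
    rw [← Matrix.l2_opNorm_conjTranspose_mul_self, h1, Matrix.l2_opNorm_diagonal]
    refine (pi_norm_le_iff_of_nonneg zero_le_one).mpr fun p => ?_
    split_ifs <;> simp
  nlinarith [norm_nonneg U]

/-- Left coefficients of `reduction` as an elementary operator. -/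
def redLeft (ι J : Type*) [Fintype ι] [DecidableEq ι] [DecidableEq J] :
    Option (ι × ι) → Matrix (ι × J) (ι × J) ℂ
  | none => -1
  | some k => (Fintype.card ι : ℂ) • (Matrix.single k.1 k.2 (1 : ℂ) ⊗ₖ (1 : Matrix J J ℂ))

/-- Right coefficients of `reduction` as an elementary operator. -/
def redRight (ι J : Type*) [DecidableEq ι] [DecidableEq J] :
    Option (ι × ι) → Matrix (ι × J) (ι × J) ℂ
  | none => 1
  | some k => Matrix.single k.2 k.1 (1 : ℂ) ⊗ₖ (1 : Matrix J J ℂ)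

lemma norm_one_le {I : Type*} [Fintype I] [DecidableEq I] : ‖(1 : Matrix I I ℂ)‖ ≤ 1 := by
  rw [← Matrix.diagonal_one, Matrix.l2_opNorm_diagonal]
  exact (pi_norm_le_iff_of_nonneg zero_le_one).mpr fun p => by simp

lemma norm_redLeft_le [Nonempty ι] (k : Option (ι × ι)) :
    ‖redLeft ι J k‖ ≤ Fintype.card ι := by
  have hn1 : (1 : ℝ) ≤ Fintype.card ι := by exact_mod_cast Fintype.card_pos
  rcases k with _ | k
  · rw [redLeft, norm_neg]
    exact norm_one_le.trans hn1
  · rw [redLeft, norm_smul, Complex.norm_natCast]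
    exact mul_le_of_le_one_right (by positivity) (norm_single_kronecker_one_le _ _)

lemma norm_redRight_le (k : Option (ι × ι)) : ‖redRight ι J k‖ ≤ 1 := by
  rcases k with _ | k
  · exact norm_one_le
  · exact norm_single_kronecker_one_le _ _

lemma reduction_eq_sum (Y : Matrix (ι × J) (ι × J) ℂ) :
    reduction Y = ∑ k, redLeft ι J k * Y * redRight ι J k := by
  have h1 : ∀ β γ : ι, Matrix.single β γ (1 : ℂ) ⊗ₖ (1 : Matrix J J ℂ) * Y *
      (Matrix.single γ β (1 : ℂ) ⊗ₖ (1 : Matrix J J ℂ)) =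
      Matrix.of fun p q => if p.1 = β ∧ q.1 = β then Y (γ, p.2) (γ, q.2) else 0 := by
    intro β γ
    ext ⟨p, a⟩ ⟨q, b⟩
    simp only [Matrix.mul_apply, Fintype.sum_prod_type, Matrix.kroneckerMap_apply,
      Matrix.single_apply, Matrix.one_apply, Matrix.of_apply, mul_ite, mul_one, mul_zero, ite_mul,
      one_mul, zero_mul]
    rw [Finset.sum_eq_single γ (by intro k _ hk; simp [hk.symm]) (by simp),
      Finset.sum_eq_single b (by intro k _ hk; simp [hk]) (by simp),
      Finset.sum_eq_single γ (by intro k _ hk; simp [hk.symm]) (by simp),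
      Finset.sum_eq_single a (by intro k _ hk; simp [hk.symm]) (by simp)]
    by_cases e1 : β = p <;> by_cases e2 : β = q <;> simp [e1, e2] <;> simp_all [eq_comm]
  rw [Fintype.sum_option, Fintype.sum_prod_type]
  simp only [redLeft, redRight, Matrix.smul_mul, h1]
  ext ⟨p, a⟩ ⟨q, b⟩
  simp only [reduction, Matrix.of_apply, Matrix.add_apply, Matrix.sum_apply, Matrix.smul_apply,
    smul_eq_mul, Matrix.neg_mul, Matrix.one_mul, Matrix.mul_one, Matrix.neg_apply]
  have h2 : (∑ β, ∑ γ, (Fintype.card ι : ℂ) *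
      (if p = β ∧ q = β then Y (γ, a) (γ, b) else 0)) =
      Fintype.card ι * (if p = q then ∑ α, Y (α, a) (α, b) else 0) := by
    rw [Finset.sum_eq_single p (by intro k _ hk; simp [hk.symm]) (by simp), ← Finset.mul_sum]
    by_cases e1 : p = q
    · simp [e1]
    · simp [e1, Ne.symm e1]
  rw [h2]
  ring

lemma norm_reduction_le [Nonempty ι] (Y : Matrix (ι × J) (ι × J) ℂ) :
    ‖reduction Y‖ ≤ ((Fintype.card ι : ℝ) ^ 2 + 1) * Fintype.card ι * ‖Y‖ := by
  rw [reduction_eq_sum]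
  refine (norm_sum_le _ _).trans ?_
  have h1 : ∀ k, ‖redLeft ι J k * Y * redRight ι J k‖ ≤ Fintype.card ι * ‖Y‖ := by
    intro k
    refine (norm_mul_le _ _).trans ?_
    refine (mul_le_of_le_one_right (norm_nonneg _) (norm_redRight_le k)).trans ?_
    refine (norm_mul_le _ _).trans ?_
    exact mul_le_mul_of_nonneg_right (norm_redLeft_le k) (norm_nonneg _)
  refine (Finset.sum_le_sum fun k _ => h1 k).trans (le_of_eq ?_)
  rw [Finset.sum_const, Finset.card_univ, Fintype.card_option, Fintype.card_prod, nsmul_eq_mul]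
  push_cast
  ring

lemma isHermitian_reduction {Y : Matrix (ι × J) (ι × J) ℂ} (hY : Y.IsHermitian) :
    (reduction Y).IsHermitian := by
  ext p q
  simp only [reduction, Matrix.conjTranspose_apply, Matrix.of_apply, star_sub, star_mul',
    star_natCast, hY.apply]
  congr 2
  by_cases h : p.1 = q.1
  · simp [h, hY.apply]
  · simp [h, Ne.symm h]

lemma evalMat_reduction (x : Matrix (ι × J) (ι × J) ℂ)
    (c : Matrix (ι × J) (ι × J) (EntryPoly (ι × J))) :
    evalMat x (reduction c) = reduction (evalMat x c) := by
  ext p q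
  simp only [evalMat, reduction, Matrix.map_apply, Matrix.of_apply, map_sub, map_mul, map_natCast,
    apply_ite (evalAt x), map_sum, map_zero]

/-- The matrix `K - (n (1 ⊗ Tr₁ X) - X)` with polynomial entries. -/
def shifted (ι J : Type*) [Fintype ι] [DecidableEq ι] [DecidableEq J] (K : ℝ) :
    Matrix (ι × J) (ι × J) (EntryPoly (ι × J)) :=
  (MvPolynomial.C (K : ℂ) : EntryPoly (ι × J)) • 1 - reduction (genMat (ι × J))

lemma evalMat_shifted (x : Matrix (ι × J) (ι × J) ℂ) (K : ℝ) :
    evalMat x (shifted ι J K) = (K : ℂ) • 1 - reduction x := by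
  rw [shifted, evalMat_sub, evalMat_smul, evalMat_one, evalMat_reduction, evalMat_genMat]
  simp [evalAt]

lemma evalMat_pow {I : Type*} [Fintype I] [DecidableEq I] (x : Matrix I I ℂ)
    (c : Matrix I I (EntryPoly I)) (q : ℕ) : evalMat x (c ^ q) = evalMat x c ^ q := by
  induction q with
  | zero => rw [pow_zero, pow_zero, evalMat_one]
  | succ q ih => rw [pow_succ, pow_succ, evalMat_mul, ih]

lemma shifted_map_unitDer (K : ℝ) (i j : ι × J) : (shifted ι J K).map (unitDer i j) =
    - reduction (Matrix.single i j 1 * genMat (ι × J) - genMat (ι × J) * Matrix.single i j 1) := by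
  have h1 : (genMat (ι × J)).map (unitDer i j) = _ := actsByCommutator_genMat i j
  rw [← h1]
  refine Matrix.ext fun p q => ?_
  have h2 : unitDer i j ((MvPolynomial.C (K : ℂ)) *
      (1 : Matrix (ι × J) (ι × J) (EntryPoly (ι × J))) p q) = 0 := by
    rw [Matrix.one_apply]
    split_ifs
    · rw [mul_one]; exact (unitDer i j).map_algebraMap _
    · rw [mul_zero, map_zero]
  have h3 : ∀ u : EntryPoly (ι × J), unitDer i j ((Fintype.card ι : EntryPoly (ι × J)) * u) =
      (Fintype.card ι : EntryPoly (ι × J)) * unitDer i j u := by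
    intro u
    rw [← nsmul_eq_mul, map_nsmul, nsmul_eq_mul]
  simp only [Matrix.map_apply, shifted, Matrix.sub_apply, Matrix.smul_apply, smul_eq_mul, map_sub,
    h2, zero_sub, Matrix.neg_apply, reduction, Matrix.of_apply, h3, apply_ite (unitDer i j),
    map_sum, map_zero]

lemma evalMat_shifted_map (x : Matrix (ι × J) (ι × J) ℂ) (K : ℝ) (i j : ι × J) :
    evalMat x ((shifted ι J K).map (unitDer i j)) =
      ∑ k : Option (ι × ι) × Bool,
        (if k.2 then -redLeft ι J k.1 else redLeft ι J k.1 * x) * Matrix.single i j 1 *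
        (if k.2 then x * redRight ι J k.1 else redRight ι J k.1) := by
  have hs : evalMat x (Matrix.single i j (1 : EntryPoly (ι × J))) = Matrix.single i j (1 : ℂ) := by
    ext p q
    simp only [evalMat, Matrix.map_apply, Matrix.single_apply, apply_ite (evalAt x), map_one,
      map_zero]
  have hneg : ∀ c : Matrix (ι × J) (ι × J) (EntryPoly (ι × J)),
      evalMat x (-c) = -evalMat x c := by
    intro c; ext p q; simp [evalMat]
  rw [shifted_map_unitDer, hneg, evalMat_reduction, evalMat_sub, evalMat_mul, evalMat_mul,
    evalMat_genMat, hs, reduction_eq_sum, Fintype.sum_prod_type, ← Finset.sum_neg_distrib]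
  refine Finset.sum_congr rfl fun k _ => ?_
  rw [Fintype.sum_bool]
  simp only [if_true, Bool.false_eq_true, if_false, Matrix.mul_sub, Matrix.sub_mul, Matrix.neg_mul,
    Matrix.mul_assoc]
  abel

lemma map_derivation_pow {I 𝔓 : Type*} [Fintype I] [DecidableEq I] [CommRing 𝔓] [Algebra ℂ 𝔓]
    (D : Derivation ℂ 𝔓 𝔓) (c : Matrix I I 𝔓) (q : ℕ) :
    (c ^ q).map D = ∑ k ∈ Finset.range q, c ^ k * c.map D * c ^ (q - 1 - k) := by
  induction q with
  | zero =>
    ext i j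
    simp only [pow_zero, Matrix.map_apply, Matrix.one_apply, Finset.range_zero, Finset.sum_empty,
      Matrix.zero_apply]
    split_ifs <;> simp
  | succ q ih =>
    rw [pow_succ, map_derivation_mul, ih, Finset.sum_range_succ, Finset.sum_mul]
    congr 1
    · refine Finset.sum_congr rfl fun k hk => ?_
      rw [Matrix.mul_assoc, ← pow_succ]
      congr 2
      have := Finset.mem_range.mp hk
      omega
    · simp

/-- The constant in `InvMeasure.energy_pow_le`. -/
def energyConst (k r : ℝ) : ℝ := ((k ^ 2 + 1) * 2 * (k * (1 + r) * (1 + r))) ^ 2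

lemma evalMat_sum {I K L κ : Type*} (x : Matrix I I ℂ) (s : Finset κ)
    (c : κ → Matrix K L (EntryPoly I)) :
    evalMat x (∑ k ∈ s, c k) = ∑ k ∈ s, evalMat x (c k) := by
  ext p q
  simp [evalMat, Matrix.sum_apply]

lemma sum_hsSq_pow_map_le [Nonempty ι] {x : Matrix (ι × J) (ι × J) ℂ} {r K : ℝ} (hr : ‖x‖ ≤ r)
    (hm : (evalMat x (shifted ι J K)).IsHermitian) (h1 : ∀ i, 1 ≤ hm.eigenvalues i) (q : ℕ) :
    ∑ i, ∑ j, hsSq (evalMat x ((shifted ι J K ^ q).map (unitDer i j))) ≤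
      energyConst (Fintype.card ι) r * q ^ 2 * Fintype.card (ι × J) *
        hsSq (evalMat x (shifted ι J K) ^ q) := by
  obtain ⟨m, hmdef⟩ : ∃ m, m = evalMat x (shifted ι J K) := ⟨_, rfl⟩
  simp only [← hmdef] at hm h1 ⊢
  have hr0 : 0 ≤ r := (norm_nonneg _).trans hr
  have h2 : ∀ i j, hsSq (evalMat x ((shifted ι J K ^ q).map (unitDer i j))) ≤
      q * ∑ k ∈ Finset.range q, hsSq (m ^ k *
        (evalMat x ((shifted ι J K).map (unitDer i j))) * m ^ (q - 1 - k)) := by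
    intro i j
    rw [map_derivation_pow, evalMat_sum]
    refine (hsSq_sum_le _ _).trans (le_of_eq ?_)
    rw [Finset.card_range]
    simp only [evalMat_mul, evalMat_pow, hmdef]
  refine (Finset.sum_le_sum fun i _ => Finset.sum_le_sum fun j _ => h2 i j).trans ?_
  simp only [← Finset.mul_sum]
  rw [Finset.sum_congr rfl fun i _ => Finset.sum_comm, Finset.sum_comm]
  have h3 : ∀ k ∈ Finset.range q, ∑ i, ∑ j, hsSq (m ^ k *
      (evalMat x ((shifted ι J K).map (unitDer i j))) * m ^ (q - 1 - k)) ≤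
      energyConst (Fintype.card ι) r * (Fintype.card (ι × J) * hsSq (m ^ q)) := by
    intro k hk
    simp only [evalMat_shifted_map]
    refine (sum_hsSq_elementary_le (α := Fintype.card ι * (1 + r)) (β := 1 + r) ?_ ?_ _ _).trans ?_
    · rintro ⟨k, b⟩
      have := norm_redLeft_le (J := J) k
      have hx := norm_mul_le (redLeft ι J k) x
      have hx2 := mul_le_mul this hr (norm_nonneg _) (by positivity)
      have : (0 : ℝ) ≤ Fintype.card ι := by positivity
      cases b
      · simp only [Bool.false_eq_true, if_false]
        nlinarith
      · simp only [if_true, norm_neg]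
        nlinarith
    · rintro ⟨k, b⟩
      have := norm_redRight_le (J := J) k
      have hx := norm_mul_le x (redRight ι J k)
      have hx2 := mul_le_mul hr this (norm_nonneg _) hr0
      cases b
      · simp only [Bool.false_eq_true, if_false]
        linarith
      · simp only [if_true]
        linarith
    · rw [energyConst, Fintype.card_prod, Fintype.card_option, Fintype.card_prod, Fintype.card_bool]
      push_cast
      rw [← pow_two]
      refine mul_le_mul_of_nonneg_left ?_ (by positivity)
      refine hsSq_pow_mul_le hm h1 ?_
      have := Finset.mem_range.mp hk
      omega
  refine (mul_le_mul_of_nonneg_left (Finset.sum_le_sum h3) (by positivity)).trans (le_of_eq ?_)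
  rw [Finset.sum_const, Finset.card_range, nsmul_eq_mul]
  ring

variable {ν : Measure (Matrix (ι × J) (ι × J) ℂ)} [IsFiniteMeasure ν] {r : ℝ}

lemma InvMeasure.re_pairing_self_eq {R : Type*} [Fintype R] (h : InvMeasure ν r)
    (F : Matrix (ι × J) R (EntryPoly (ι × J))) :
    (pairing (conjPoly (ι × J)) h.expect F F).re = ∫ x, hsSq (evalMat x F) ∂ν := by
  rw [pairing_eq_dotPoly, h.expect_re]
  refine integral_congr_ae (h.herm.mono fun x hx => ?_)
  simp only [evalAt_dotPoly hx, hsSq_eq_trace]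

lemma InvMeasure.integrable_hsSq {R : Type*} [Fintype R] (h : InvMeasure ν r)
    (F : Matrix (ι × J) R (EntryPoly (ι × J))) : Integrable (fun x => hsSq (evalMat x F)) ν := by
  refine (h.integrable (dotPoly F F)).re.congr (h.herm.mono fun x hx => ?_)
  simp only [evalAt_dotPoly hx, hsSq_eq_trace]
  rfl

lemma InvMeasure.energy_pow_le [Nonempty ι] (h : InvMeasure ν r) {K : ℝ}
    (hK : ∀ᵐ x ∂ν, (evalMat x (shifted ι J K) - 1).PosSemidef) (q : ℕ) :
    h.energy unitDer (shifted ι J K ^ q) ≤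
      energyConst (Fintype.card ι) r * q ^ 2 * Fintype.card (ι × J) *
        (pairing (conjPoly (ι × J)) h.expect (shifted ι J K ^ q) (shifted ι J K ^ q)).re := by
  rw [h.energy_eq]
  simp only [h.re_pairing_self_eq]
  rw [Finset.sum_congr rfl fun i _ => (integral_finsetSum _ fun j _ => h.integrable_hsSq _).symm,
    ← integral_finsetSum _ fun i _ => integrable_finsetSum _ fun j _ => h.integrable_hsSq _,
    ← integral_const_mul]
  refine integral_mono_ae (integrable_finsetSum _ fun i _ => integrable_finsetSum _ fun j _ =>
    h.integrable_hsSq _) ((h.integrable_hsSq _).const_mul _) ?_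
  filter_upwards [h.herm, h.bdd, hK] with x hx hr hx1
  have hm : (evalMat x (shifted ι J K)).IsHermitian := by
    rw [evalMat_shifted]
    exact (isHermitian_real_smul_one K).sub (isHermitian_reduction hx)
  have h1 : ∀ i, 1 ≤ hm.eigenvalues i := by
    have := (posSemidef_smul_add_iff hm 1 (-1)).mp (by
      simpa [sub_eq_add_neg] using hx1)
    intro i
    linarith [this i]
  rw [evalMat_pow]
  exact sum_hsSq_pow_map_le hr hm h1 q

end EnergyOfPowers

section TailBound

set_option linter.unusedSectionVars false

open scoped Matrix.Norms.L2Operator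

lemma abs_eigenvalues_le_norm {I : Type*} [Fintype I] [DecidableEq I] {y : Matrix I I ℂ}
    (hy : y.IsHermitian) (i : I) : |hy.eigenvalues i| ≤ ‖y‖ := by
  have h1 := Matrix.l2_opNorm_mulVec y (hy.eigenvectorBasis i)
  have h2 : ‖hy.eigenvectorBasis i‖ = 1 := hy.eigenvectorBasis.orthonormal.1 i
  rw [hy.mulVec_eigenvectorBasis i, h2, mul_one] at h1
  have h3 : WithLp.toLp 2 (hy.eigenvalues i • (hy.eigenvectorBasis i : I → ℂ)) =
      hy.eigenvalues i • hy.eigenvectorBasis i := rfl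
  change ‖WithLp.toLp 2 (hy.eigenvalues i • (hy.eigenvectorBasis i : I → ℂ))‖ ≤ _ at h1
  rwa [h3, norm_smul, h2, mul_one, Real.norm_eq_abs] at h1

lemma posSemidef_smul_one_sub {I : Type*} [Fintype I] [DecidableEq I] {y : Matrix I I ℂ}
    (hy : y.IsHermitian) {c : ℝ} (hc : ‖y‖ ≤ c) : ((c : ℂ) • (1 : Matrix I I ℂ) - y).PosSemidef := by
  have h := (posSemidef_smul_add_iff hy (-1) c).mpr fun i => by
    linarith [le_abs_self (hy.eigenvalues i), abs_eigenvalues_le_norm hy i]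
  simpa [add_comm, sub_eq_add_neg] using h

variable {ι J : Type*} [Fintype ι] [DecidableEq ι] [Fintype J] [DecidableEq J]
  {ν : Measure (Matrix (ι × J) (ι × J) ℂ)} [IsFiniteMeasure ν] {r : ℝ}

lemma pow_mul_sub_add_pow_nonneg {u v : ℝ} (hu : 0 ≤ u) (hv : 0 ≤ v) (q : ℕ) :
    0 ≤ u ^ (2 * q) * (u - v) + v ^ (2 * q + 1) := by
  rcases le_total v u with h | h
  · have : 0 ≤ u - v := by linarith
    positivity
  · have h1 : u ^ (2 * q) * (v - u) ≤ v ^ (2 * q) * v :=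
      mul_le_mul (pow_le_pow_left₀ hu h _) (by linarith) (by linarith) (by positivity)
    rw [pow_succ]
    linarith

/-- The lower spectral edge of `n (1 ⊗ Tr₁ X) - X` predicted by `InvMeasure.reduction_lower`. -/
def redEdge (k A' m' m'' s t : ℝ) : ℝ :=
  (k ^ 2 - 1) * m' - (m'' - A' + t) - (k ^ 2 - 2) * (t⁻¹ * s)

lemma err_term_le {e d En Ec k P δ : ℝ} {q : ℕ} (he : 0 ≤ e) (hd : 0 < d) (hP : 0 ≤ P)
    (hEn : En ≤ Ec * q ^ 2 * (k * d) * P) (hq : e * Ec * q ^ 2 * k ≤ δ * d) :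
    e * ((d ^ 2)⁻¹ * En) ≤ δ * P := by
  have h1 : e * ((d ^ 2)⁻¹ * En) ≤ e * ((d ^ 2)⁻¹ * (Ec * q ^ 2 * (k * d) * P)) :=
    mul_le_mul_of_nonneg_left (mul_le_mul_of_nonneg_left hEn (by positivity)) he
  have h2 : e * ((d ^ 2)⁻¹ * (Ec * q ^ 2 * (k * d) * P)) = d⁻¹ * (e * Ec * q ^ 2 * k) * P := by
    field_simp
  have h3 : d⁻¹ * (e * Ec * q ^ 2 * k) * P ≤ d⁻¹ * (δ * d) * P :=
    mul_le_mul_of_nonneg_right (mul_le_mul_of_nonneg_left hq (by positivity)) hP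
  have h4 : d⁻¹ * (δ * d) * P = δ * P := by field_simp
  linarith

lemma InvMeasure.expect_power_le [Nonempty ι] [Nonempty J] (h : InvMeasure ν r)
    {A' m' m'' s t δ K : ℝ} (hg : ∀ᵐ x ∂ν, GoodMat A' r m' m'' s x) (ht : 0 < t) (hs : 0 ≤ s)
    (ha : 0 ≤ m'' - A') (hw : 0 ≤ m'' - A' + t - t⁻¹ * s) {q : ℕ}
    (hK : ∀ᵐ x ∂ν, (evalMat x (shifted ι J K) - 1).PosSemidef)
    (hq : errConst' (Fintype.card ι) r (m'' - A') s t * energyConst (Fintype.card ι) r * q ^ 2 *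
      Fintype.card ι ≤ δ * Fintype.card J) :
    (h.expect (dotPoly (shifted ι J K ^ q) (shifted ι J K * shifted ι J K ^ q) -
      ((K - redEdge (Fintype.card ι) A' m' m'' s t + δ : ℝ) : ℂ) •
        dotPoly (shifted ι J K ^ q) (shifted ι J K ^ q))).re ≤ 0 := by
  have hn1 : (1 : ℝ) ≤ Fintype.card ι := by exact_mod_cast Fintype.card_pos
  have hd1 : (1 : ℝ) ≤ Fintype.card J := by exact_mod_cast Fintype.card_pos
  set F := shifted ι J K ^ q with hF
  have h1 := h.reduction_lower hg ht hs ha hw F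
  have h2 := h.energy_pow_le hK q
  rw [← hF] at h2
  have hP := h.re_pairing_self_nonneg F
  have h3 : pairing (conjPoly (ι × J)) h.expect F (shifted ι J K * F) =
      (K : ℂ) * pairing (conjPoly (ι × J)) h.expect F F -
        pairing (conjPoly (ι × J)) h.expect F (reduction (genMat (ι × J)) * F) := by
    have : (MvPolynomial.C (K : ℂ) : EntryPoly (ι × J)) • F = (K : ℂ) • F := by
      refine Matrix.ext fun p q => ?_
      simp only [Matrix.smul_apply, smul_eq_mul, MvPolynomial.C_mul']
    rw [shifted, Matrix.sub_mul, pairing_sub_right, Matrix.smul_mul, Matrix.one_mul, this,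
      pairing_smul_right]
  rw [map_sub, map_smul, ← pairing_eq_dotPoly, ← pairing_eq_dotPoly, h3, smul_eq_mul,
    Complex.sub_re, Complex.sub_re, Complex.re_ofReal_mul, Complex.re_ofReal_mul]
  have he : 0 ≤ errConst' (Fintype.card ι) r (m'' - A') s t := by
    have h5 : 0 ≤ errConst r (m'' - A') s t := by
      unfold errConst
      positivity
    have h6 : (0 : ℝ) ≤ (Fintype.card ι : ℝ) ^ 2 - 1 := by nlinarith
    unfold errConst'
    positivity
  rw [Fintype.card_prod] at h2
  push_cast at h2
  have h4 := err_term_le he (by linarith) hP h2 hq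
  unfold redEdge
  linarith

/-- Tail bound for the lower spectral edge of `n (1 ⊗ Tr₁ X) - X`. -/
lemma InvMeasure.measureReal_not_posSemidef_le [Nonempty ι] [Nonempty J] (h : InvMeasure ν r)
    (hν : ν.real Set.univ ≤ 1)
    {A' m' m'' s t δ K : ℝ} (hg : ∀ᵐ x ∂ν, GoodMat A' r m' m'' s x) (ht : 0 < t) (hs : 0 ≤ s)
    (ha : 0 ≤ m'' - A') (hw : 0 ≤ m'' - A' + t - t⁻¹ * s) (hδ : 0 < δ) {q : ℕ}
    (hK : ((Fintype.card ι : ℝ) ^ 2 + 1) * Fintype.card ι * r + 1 ≤ K)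
    (hKz : redEdge (Fintype.card ι) A' m' m'' s t ≤ K)
    (hq : errConst' (Fintype.card ι) r (m'' - A') s t * energyConst (Fintype.card ι) r * q ^ 2 *
      Fintype.card ι ≤ δ * Fintype.card J) :
    δ * (K - redEdge (Fintype.card ι) A' m' m'' s t + δ + δ) ^ (2 * q) *
      ν.real {x | ¬ (reduction x - ((redEdge (Fintype.card ι) A' m' m'' s t - 2 * δ : ℝ) : ℂ) •
        (1 : Matrix (ι × J) (ι × J) ℂ)).PosSemidef} ≤
      Fintype.card (ι × J) * (K - redEdge (Fintype.card ι) A' m' m'' s t + δ) ^ (2 * q + 1) := by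
  have hK1 : ∀ᵐ x ∂ν, (evalMat x (shifted ι J K) - 1).PosSemidef := by
    filter_upwards [h.herm, h.bdd] with x hx hr
    have h1 : ‖reduction x‖ ≤ K - 1 := by
      have := norm_reduction_le x
      have h2 : ((Fintype.card ι : ℝ) ^ 2 + 1) * Fintype.card ι * ‖x‖ ≤
        ((Fintype.card ι : ℝ) ^ 2 + 1) * Fintype.card ι * r := by gcongr
      linarith
    have h3 := posSemidef_smul_one_sub (isHermitian_reduction hx) h1
    rw [evalMat_shifted]
    convert h3 using 1
    push_cast
    rw [sub_smul, one_smul]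
    abel
  have hE := h.expect_power_le (K := K) hg ht hs ha hw hK1 hq
  set z := redEdge (Fintype.card ι) A' m' m'' s t
  set v := K - z + δ with hv
  have hv0 : 0 ≤ v := by linarith
  set p := dotPoly (shifted ι J K ^ q) (shifted ι J K * shifted ι J K ^ q) -
      (v : ℂ) • dotPoly (shifted ι J K ^ q) (shifted ι J K ^ q) with hp
  set c : ℝ := Fintype.card (ι × J) * v ^ (2 * q + 1) with hc
  have hc0 : 0 ≤ c := by positivity
  have key : ∀ᵐ x ∂ν, ∃ lam : ι × J → ℝ, (∀ i, 0 ≤ lam i) ∧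
      (evalAt x p).re + c = ∑ i, (lam i ^ (2 * q) * (lam i - v) + v ^ (2 * q + 1)) ∧
      (¬ (reduction x - ((z - 2 * δ : ℝ) : ℂ) • (1 : Matrix (ι × J) (ι × J) ℂ)).PosSemidef →
        ∃ i, v + δ < lam i) := by
    filter_upwards [h.herm, hK1] with x hx hx1
    have hm : (evalMat x (shifted ι J K)).IsHermitian := by
      rw [evalMat_shifted]
      exact (isHermitian_real_smul_one K).sub (isHermitian_reduction hx)
    refine ⟨hm.eigenvalues, ?_, ?_, ?_⟩
    · have := (posSemidef_smul_add_iff hm 1 (-1)).mp (by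
        simpa [sub_eq_add_neg] using hx1)
      intro i
      linarith [this i]
    · have e1 : evalAt x p = ((∑ i, hm.eigenvalues i ^ (2 * q) * (hm.eigenvalues i - v) : ℝ) : ℂ) := by
        rw [hp, map_sub, map_smul, evalAt_dotPoly hx, evalAt_dotPoly hx, evalMat_mul, evalMat_pow,
          (hm.pow q).eq, ← pow_succ', ← pow_add, ← pow_add, trace_pow_eq_sum_eigenvalues hm,
          trace_pow_eq_sum_eigenvalues hm, smul_eq_mul]
        push_cast
        rw [Finset.mul_sum, ← Finset.sum_sub_distrib]
        refine Finset.sum_congr rfl fun i _ => ?_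
        ring
      rw [e1, Complex.ofReal_re, Finset.sum_add_distrib, Finset.sum_const, Finset.card_univ,
        nsmul_eq_mul]
    · intro hnot
      by_contra hcon
      push Not at hcon
      refine hnot ?_
      have := (posSemidef_smul_add_iff hm (-1) (v + δ)).mpr fun i => by linarith [hcon i]
      convert this using 1
      rw [evalMat_shifted, hv]
      push_cast
      simp only [neg_smul, one_smul, sub_smul, add_smul, mul_smul, two_smul]
      abel
  have hf0 : 0 ≤ᵐ[ν] fun x => (evalAt x p).re + c := by
    filter_upwards [key] with x hx
    obtain ⟨lam, h0, h1, -⟩ := hx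
    simp only [Pi.zero_apply]
    rw [h1]
    exact Finset.sum_nonneg fun i _ => pow_mul_sub_add_pow_nonneg (h0 i) hv0 q
  have hfi : Integrable (fun x => (evalAt x p).re) ν := (h.integrable p).re
  have hM := mul_meas_ge_le_integral_of_nonneg hf0 (hfi.add (integrable_const c))
    (δ * (v + δ) ^ (2 * q))
  have hInt : ∫ x, ((evalAt x p).re + c) ∂ν ≤ c := by
    rw [integral_add hfi (integrable_const c), ← h.expect_re, integral_const, smul_eq_mul]
    have := mul_le_mul_of_nonneg_right hν hc0
    linarith
  refine le_trans ?_ (hM.trans hInt)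
  refine mul_le_mul_of_nonneg_left ?_ (by positivity)
  refine ENNReal.toReal_mono (measure_ne_top _ _) (measure_mono_ae ?_)
  filter_upwards [key] with x hx hbad
  obtain ⟨lam, h0, h1, h2⟩ := hx
  obtain ⟨i, hi⟩ := h2 hbad
  change δ * (v + δ) ^ (2 * q) ≤ (evalAt x p).re + c
  rw [h1]
  refine le_trans ?_ (Finset.single_le_sum (fun j _ => pow_mul_sub_add_pow_nonneg (h0 j) hv0 q)
    (Finset.mem_univ i))
  have e1 : (v + δ) ^ (2 * q) * δ ≤ lam i ^ (2 * q) * (lam i - v) :=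
    mul_le_mul (pow_le_pow_left₀ (by linarith) hi.le _) (by linarith) hδ.le
      (pow_nonneg (h0 i) _)
  have e2 : 0 ≤ v ^ (2 * q + 1) := by positivity
  linarith

end TailBound

section Separability

set_option linter.unusedSectionVars false

lemma kronecker_mem_SEP {n d : ℕ} {a : Matrix (Fin n) (Fin n) ℂ} {b : Matrix (Fin d) (Fin d) ℂ}
    (ha : a.PosSemidef) (hb : b.PosSemidef) : a ⊗ₖ b ∈ SEP n d :=
  ⟨1, fun _ => a, fun _ => b, fun _ => ha, fun _ => hb, by simp⟩

lemma zero_mem_SEP (n d : ℕ) : (0 : Matrix (Fin n × Fin d) (Fin n × Fin d) ℂ) ∈ SEP n d :=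
  ⟨0, fun _ => 0, fun _ => 0, fun i => i.elim0, fun i => i.elim0, by simp⟩

lemma add_mem_SEP {n d : ℕ} {x y : Matrix (Fin n × Fin d) (Fin n × Fin d) ℂ}
    (hx : x ∈ SEP n d) (hy : y ∈ SEP n d) : x + y ∈ SEP n d := by
  obtain ⟨k, a, b, ha, hb, rfl⟩ := hx
  obtain ⟨l, a', b', ha', hb', rfl⟩ := hy
  refine ⟨k + l, Fin.append a a', Fin.append b b', fun i => ?_, fun i => ?_, ?_⟩
  · refine Fin.addCases (fun i => ?_) (fun i => ?_) i
    · simpa using ha i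
    · simpa using ha' i
  · refine Fin.addCases (fun i => ?_) (fun i => ?_) i
    · simpa using hb i
    · simpa using hb' i
  · simp [Fin.sum_univ_add]

lemma smul_mem_SEP {n d : ℕ} {x : Matrix (Fin n × Fin d) (Fin n × Fin d) ℂ} {c : ℂ} (hc : 0 ≤ c)
    (hx : x ∈ SEP n d) : c • x ∈ SEP n d := by
  obtain ⟨k, a, b, ha, hb, rfl⟩ := hx
  refine ⟨k, fun i => c • a i, b, fun i => (ha i).smul hc, hb, ?_⟩
  simp [Finset.smul_sum, Matrix.smul_kronecker]

lemma sum_mem_SEP {n d : ℕ} {κ : Type*} (s : Finset κ)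
    {f : κ → Matrix (Fin n × Fin d) (Fin n × Fin d) ℂ} (hf : ∀ k ∈ s, f k ∈ SEP n d) :
    ∑ k ∈ s, f k ∈ SEP n d :=
  Finset.sum_induction f (· ∈ SEP n d) (fun _ _ => add_mem_SEP) (zero_mem_SEP n d) hf

variable {ι J : Type*} [Fintype ι] [DecidableEq ι] [Fintype J] [DecidableEq J]

/-- The compression `(y* ⊗ 1) Z (y ⊗ 1)`. -/
def compress (y : ι → ℂ) (Z : Matrix (ι × J) (ι × J) ℂ) : Matrix J J ℂ :=
  Matrix.of fun a b => ∑ k, ∑ l, star (y k) * y l * Z (k, a) (l, b)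

lemma posSemidef_compress (y : ι → ℂ) {Z : Matrix (ι × J) (ι × J) ℂ} (hZ : Z.PosSemidef) :
    (compress y Z).PosSemidef := by
  have h := hZ.conjTranspose_mul_mul_same
    (Matrix.of fun (p : ι × J) (b : J) => if p.2 = b then y p.1 else 0)
  convert h using 1
  ext a b
  simp only [compress, Matrix.of_apply, Matrix.mul_apply, Matrix.conjTranspose_apply,
    Fintype.sum_prod_type, apply_ite star, star_zero, ite_mul, mul_ite, zero_mul, mul_zero,
    Finset.sum_ite_eq', Finset.mem_univ, if_true, Finset.sum_mul]
  rw [Finset.sum_comm]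
  refine Finset.sum_congr rfl fun k _ => Finset.sum_congr rfl fun l _ => ?_
  ring

/-- The vector `e_i + c e_j`. -/
def pairVec (i j : ι) (c : ℂ) : ι → ℂ := fun k => (if k = i then 1 else 0) + c * if k = j then 1 else 0

lemma compress_pairVec (i j : ι) (c : ℂ) (Z : Matrix (ι × J) (ι × J) ℂ) (a b : J) :
    compress (pairVec i j c) Z a b = Z (i, a) (i, b) + c * Z (i, a) (j, b) +
      star c * Z (j, a) (i, b) + star c * c * Z (j, a) (j, b) := by
  simp only [compress, pairVec, Matrix.of_apply, star_add, apply_ite star, star_zero,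
    star_one, add_mul, mul_add, mul_ite, ite_mul, one_mul, zero_mul, mul_one, mul_zero,
    Finset.sum_add_distrib, Finset.sum_ite_eq', Finset.mem_univ, if_true]
  simp
  ring

/-- Separable matrix attached to a pair of block indices. -/
def pairSep (i j : ι) (Z : Matrix (ι × J) (ι × J) ℂ) : Matrix (ι × J) (ι × J) ℂ :=
  ∑ k : Fin 4, vecMulVec (pairVec i j (Complex.I ^ (k : ℕ))) (star (pairVec i j (Complex.I ^ (k : ℕ))))
    ⊗ₖ compress (pairVec i j (-(Complex.I ^ (k : ℕ)))) Z

lemma pairSep_apply (i j : ι) (Z : Matrix (ι × J) (ι × J) ℂ) (p q : ι) (a b : J) :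
    pairSep i j Z (p, a) (q, b) = 4 *
      (((if p = i then 1 else 0) * (if q = i then 1 else 0) +
        (if p = j then 1 else 0) * (if q = j then 1 else 0)) *
          (Z (i, a) (i, b) + Z (j, a) (j, b)) -
        (if p = i then 1 else 0) * (if q = j then 1 else 0) * Z (i, a) (j, b) -
        (if p = j then 1 else 0) * (if q = i then 1 else 0) * Z (j, a) (i, b)) := by
  have hI : ∀ k : ℕ, star (Complex.I ^ k) = (-Complex.I) ^ k := fun k => by
    rw [star_pow]; simp
  simp only [pairSep, Matrix.sum_apply, Matrix.kroneckerMap_apply, vecMulVec_apply, Pi.star_apply,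
    compress_pairVec, pairVec, star_add, star_mul', star_neg, hI, Fin.sum_univ_four]
  have e1 : ∀ P : Prop, ∀ [Decidable P], star (if P then (1 : ℂ) else 0) = if P then 1 else 0 := by
    intro P _; split_ifs <;> simp
  simp only [e1]
  generalize (if p = i then (1 : ℂ) else 0) = u1
  generalize (if p = j then (1 : ℂ) else 0) = u2
  generalize (if q = i then (1 : ℂ) else 0) = u3
  generalize (if q = j then (1 : ℂ) else 0) = u4
  have e2 : Complex.I ^ 2 = -1 := Complex.I_sq
  have e3 : Complex.I ^ 3 = -Complex.I := by rw [pow_succ, e2]; ring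
  have e4 : Complex.I ^ 4 = 1 := by rw [show 4 = 2 * 2 from rfl, pow_mul, e2]; ring
  have e5 : Complex.I ^ 5 = Complex.I := by rw [pow_succ, e4]; ring
  have e6 : Complex.I ^ 6 = -1 := by rw [pow_succ, e5, ← sq, e2]
  have e7 : Complex.I ^ 7 = -Complex.I := by rw [pow_succ, e6]; ring
  have e8 : Complex.I ^ 8 = 1 := by rw [show 8 = 4 * 2 from rfl, pow_mul, e4]; ring
  simp
  ring_nf
  simp only [e2, e3, e4, e5, e6, e7, e8]
  ring

lemma reduction_eq_pairSep (Z : Matrix (ι × J) (ι × J) ℂ) :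
    reduction Z = ∑ i, ∑ j, if i = j then 0 else
      ((8 : ℂ)⁻¹ • pairSep i j Z + ((Fintype.card ι : ℂ) - 1) •
        (vecMulVec (Pi.single i 1) (star (Pi.single i 1)) ⊗ₖ compress (Pi.single j 1) Z)) := by
  have hs : ∀ g : ι → ι → ℂ, (∑ i, ∑ j, if i = j then 0 else g i j) =
      ∑ i, ∑ j, g i j - ∑ i, g i i := by
    intro g
    rw [← Finset.sum_sub_distrib]
    refine Finset.sum_congr rfl fun i _ => ?_
    have h1 : ∑ j, (if i = j then g i j else 0) = g i i := by simp
    rw [← h1, ← Finset.sum_sub_distrib]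
    refine Finset.sum_congr rfl fun j _ => ?_
    split_ifs <;> simp
  have hc : ∀ (j : ι) (a b : J), compress (Pi.single j 1) Z a b = Z (j, a) (j, b) := by
    intro j a b
    have : (Pi.single j 1 : ι → ℂ) = pairVec j j 0 := by
      funext k
      simp [pairVec, Pi.single_apply]
    rw [this, compress_pairVec]
    simp
  ext ⟨p, a⟩ ⟨q, b⟩
  have hv : ∀ i : ι, (vecMulVec (Pi.single i 1) (star (Pi.single i 1)) : Matrix ι ι ℂ) p q =
      (if p = i then 1 else 0) * (if q = i then 1 else 0) := by
    intro i
    simp [vecMulVec_apply, Pi.single_apply]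
  simp only [Matrix.sum_apply, apply_ite (fun M : Matrix (ι × J) (ι × J) ℂ => M (p, a) (q, b)),
    Matrix.zero_apply, Matrix.add_apply, Matrix.smul_apply, Matrix.kroneckerMap_apply, hc, hv,
    pairSep_apply, smul_eq_mul]
  rw [hs]
  simp only [reduction, Matrix.of_apply]
  simp only [mul_ite, ite_mul, mul_one, one_mul, mul_zero, zero_mul, mul_add, mul_sub, add_mul,
    Finset.sum_add_distrib, Finset.sum_sub_distrib, Finset.sum_ite_eq, Finset.mem_univ, if_true,
    Finset.sum_ite_irrel, Finset.sum_const_zero]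
  by_cases hpq : p = q
  · subst hpq
    simp [← Finset.mul_sum]
    ring
  · simp [hpq]
    ring

lemma reduction_mem_SEP {n d : ℕ} {Z : Matrix (Fin n × Fin d) (Fin n × Fin d) ℂ}
    (hZ : Z.PosSemidef) : reduction Z ∈ SEP n d := by
  rw [reduction_eq_pairSep]
  refine sum_mem_SEP _ fun i _ => sum_mem_SEP _ fun j _ => ?_
  split_ifs with hij
  · exact zero_mem_SEP n d
  · have hn : (1 : ℝ) ≤ Fintype.card (Fin n) := by
      exact_mod_cast Fintype.card_pos_iff.mpr ⟨i⟩
    have h8 : (0 : ℂ) ≤ (8 : ℂ)⁻¹ := by simp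
    have hn' : (0 : ℂ) ≤ (Fintype.card (Fin n) : ℂ) - 1 := by
      exact_mod_cast sub_nonneg.mpr hn
    refine add_mem_SEP (smul_mem_SEP h8 (sum_mem_SEP _ fun k _ => ?_)) (smul_mem_SEP hn' ?_)
    · exact kronecker_mem_SEP (Matrix.posSemidef_vecMulVec_self_star _) (posSemidef_compress _ hZ)
    · exact kronecker_mem_SEP (Matrix.posSemidef_vecMulVec_self_star _) (posSemidef_compress _ hZ)

lemma reduction_reduction_sub (x : Matrix (ι × J) (ι × J) ℂ) :
    reduction (reduction x - ((Fintype.card ι : ℂ) ^ 2 - 2) • x) =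
      ((Fintype.card ι : ℂ) ^ 2 - 1) • x := by
  ext ⟨p, a⟩ ⟨q, b⟩
  simp only [reduction, Matrix.of_apply, Matrix.sub_apply, Matrix.smul_apply, smul_eq_mul, if_true,
    Finset.sum_sub_distrib, ← Finset.mul_sum, Finset.sum_const, Finset.card_univ, nsmul_eq_mul]
  split_ifs <;> ring

/-- A spectral separability criterion. -/
lemma mem_SEP_of_posSemidef {n d : ℕ} (hn : 2 ≤ n)
    {x : Matrix (Fin n × Fin d) (Fin n × Fin d) ℂ}
    (h : (reduction x - ((n : ℂ) ^ 2 - 2) • x).PosSemidef) : x ∈ SEP n d := by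
  have h1 := reduction_mem_SEP h
  have h2 := reduction_reduction_sub x
  rw [Fintype.card_fin] at h2
  rw [h2] at h1
  have h3 : (0 : ℝ) < (n : ℝ) ^ 2 - 1 := by
    have : (2 : ℝ) ≤ n := by exact_mod_cast hn
    nlinarith
  have h4 : (0 : ℂ) ≤ ((((n : ℝ) ^ 2 - 1)⁻¹ : ℝ) : ℂ) := by
    exact_mod_cast (inv_pos.mpr h3).le
  have h5 := smul_mem_SEP h4 h1
  have h6 : ((n : ℂ) ^ 2 - 1) ≠ 0 := by
    have : (((n : ℝ) ^ 2 - 1 : ℝ) : ℂ) ≠ 0 := by exact_mod_cast h3.ne'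
    simpa using this
  rw [smul_smul] at h5
  push_cast at h5
  rwa [inv_mul_cancel₀ h6, one_smul] at h5

end Separability

section GoodSet

set_option linter.unusedSectionVars false

open scoped Matrix.Norms.L2Operator

instance (m n : Type*) [Countable m] [Countable n] : BorelSpace (Matrix m n ℂ) :=
  inferInstanceAs (BorelSpace (m → n → ℂ))

variable {I : Type*} [Fintype I] [DecidableEq I]

lemma isClosed_setOf_posSemidef : IsClosed {x : Matrix I I ℂ | x.PosSemidef} := by
  have : {x : Matrix I I ℂ | x.PosSemidef} =
      {x | x.IsHermitian} ∩ ⋂ v : I → ℂ, {x | 0 ≤ star v ⬝ᵥ (x *ᵥ v)} := by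
    ext x
    simp only [Set.mem_ofPred_eq, Set.mem_inter_iff, Set.mem_iInter]
    exact Matrix.posSemidef_iff_dotProduct_mulVec
  rw [this]
  refine IsClosed.inter (isClosed_eq (by fun_prop) continuous_id) (isClosed_iInter fun v => ?_)
  exact isClosed_le continuous_const (by fun_prop)

lemma continuous_ntr : Continuous (ntr : Matrix I I ℂ → ℂ) := by
  unfold ntr
  fun_prop

lemma isClosed_setOf_goodMat (A' r m' m'' s : ℝ) :
    IsClosed {x : Matrix I I ℂ | GoodMat A' r m' m'' s x} := by
  have : {x : Matrix I I ℂ | GoodMat A' r m' m'' s x} =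
      {x | x.IsHermitian} ∩ {x | ‖x‖ ≤ r} ∩
      (fun x => x - (A' : ℂ) • (1 : Matrix I I ℂ)) ⁻¹' {x | x.PosSemidef} ∩
      {x | m' ≤ (ntr x).re} ∩ {x | (ntr x).re ≤ m''} ∩
      {x | (ntr ((x - ntr x • 1) * (x - ntr x • 1))).re ≤ s} := by
    ext x
    simp only [Set.mem_ofPred_eq, Set.mem_inter_iff, Set.mem_preimage]
    exact ⟨fun h => ⟨⟨⟨⟨⟨h.1, h.2⟩, h.3⟩, h.4⟩, h.5⟩, h.6⟩,
      fun h => ⟨h.1.1.1.1.1, h.1.1.1.1.2, h.1.1.1.2, h.1.1.2, h.1.2, h.2⟩⟩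
  have hn := continuous_ntr (I := I)
  rw [this]
  refine ((((IsClosed.inter ?_ ?_).inter ?_).inter ?_).inter ?_).inter ?_
  · exact isClosed_eq (by fun_prop) continuous_id
  · exact isClosed_le continuous_norm continuous_const
  · exact isClosed_setOf_posSemidef.preimage (by fun_prop)
  · exact isClosed_le continuous_const (Complex.continuous_re.comp hn)
  · exact isClosed_le (Complex.continuous_re.comp hn) continuous_const
  · refine isClosed_le (Complex.continuous_re.comp (hn.comp ?_)) continuous_const
    fun_prop

lemma ntr_conj {U : Matrix I I ℂ} (hU : U ∈ unitary (Matrix I I ℂ)) (x : Matrix I I ℂ) :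
    ntr (U * x * star U) = ntr x := by
  rw [ntr, ntr, Matrix.trace_mul_comm, ← mul_assoc, Unitary.star_mul_self_of_mem hU, one_mul]

lemma conj_sub_smul_one {U : Matrix I I ℂ} (hU : U ∈ unitary (Matrix I I ℂ)) (x : Matrix I I ℂ)
    (c : ℂ) : U * x * star U - c • 1 = U * (x - c • 1) * star U := by
  rw [mul_sub, sub_mul, mul_smul_comm, smul_mul_assoc, mul_one, Unitary.mul_star_self_of_mem hU]

lemma GoodMat.conj {A' r m' m'' s : ℝ} {x : Matrix I I ℂ} (h : GoodMat A' r m' m'' s x)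
    {U : Matrix I I ℂ} (hU : U ∈ unitary (Matrix I I ℂ)) :
    GoodMat A' r m' m'' s (U * x * star U) where
  herm := Matrix.isHermitian_mul_mul_conjTranspose U h.herm
  bdd := by
    rw [CStarRing.norm_mul_mem_unitary _ (Unitary.star_mem hU), CStarRing.norm_mem_unitary_mul _ hU]
    exact h.bdd
  low := by
    rw [conj_sub_smul_one hU]
    exact h.low.mul_mul_conjTranspose_same U
  mean_ge := by rw [ntr_conj hU]; exact h.mean_ge
  mean_le := by rw [ntr_conj hU]; exact h.mean_le
  var_le := by
    have e : U * (x - ntr x • 1) * star U * (U * (x - ntr x • 1) * star U) =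
        U * ((x - ntr x • 1) * (x - ntr x • 1)) * star U := by
      calc _ = U * (x - ntr x • 1) * (star U * U) * (x - ntr x • 1) * star U := by
            simp only [mul_assoc]
        _ = _ := by rw [Unitary.star_mul_self_of_mem hU]; simp only [mul_assoc, mul_one]
    rw [ntr_conj hU, conj_sub_smul_one hU, e, ntr_conj hU]
    exact h.var_le

lemma conj_preimage_goodMat (A' r m' m'' s : ℝ) {U : Matrix I I ℂ}
    (hU : U ∈ unitary (Matrix I I ℂ)) :
    (fun x => U * x * star U) ⁻¹' {x : Matrix I I ℂ | GoodMat A' r m' m'' s x} =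
      {x | GoodMat A' r m' m'' s x} := by
  ext x
  refine ⟨fun h => ?_, fun h => GoodMat.conj h hU⟩
  have h1 := GoodMat.conj (show GoodMat A' r m' m'' s (U * x * star U) from h)
    (Unitary.star_mem hU)
  have e : star U * (U * x * star U) * star (star U) = x := by
    calc _ = (star U * U) * x * (star U * U) := by simp only [star_star, mul_assoc]
      _ = _ := by rw [Unitary.star_mul_self_of_mem hU, one_mul, mul_one]
  rwa [e] at h1

lemma invMeasure_restrict {ρ : Measure (Matrix I I ℂ)}
    (hρ : ∀ U ∈ unitary (Matrix I I ℂ), ρ.map (fun x => U * x * star U) = ρ)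
    (A' r m' m'' s : ℝ) :
    InvMeasure (ρ.restrict {x | GoodMat A' r m' m'' s x}) r := by
  have hm : MeasurableSet {x : Matrix I I ℂ | GoodMat A' r m' m'' s x} :=
    (isClosed_setOf_goodMat A' r m' m'' s).measurableSet
  refine ⟨?_, ?_, fun U hU => ?_⟩
  · filter_upwards [ae_restrict_mem hm] with x hx using hx.herm
  · filter_upwards [ae_restrict_mem hm] with x hx using hx.bdd
  · have hf : Measurable fun x : Matrix I I ℂ => U * x * star U :=
      Continuous.measurable (by fun_prop)
    have h1 := Measure.restrict_map (μ := ρ) hf hm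
    rw [conj_preimage_goodMat A' r m' m'' s hU, hρ U hU] at h1
    exact h1.symm

end GoodSet

section Assembly

set_option linter.unusedSectionVars false

open scoped Matrix.Norms.L2Operator

lemma continuous_reduction {ι J : Type*} [Fintype ι] [DecidableEq ι] :
    Continuous (reduction : Matrix (ι × J) (ι × J) ℂ → Matrix (ι × J) (ι × J) ℂ) := by
  refine continuous_matrix fun p q => ?_
  simp only [reduction, Matrix.of_apply]
  split_ifs <;> fun_prop

/-- The event that `reduction x` has spectrum reaching below `c`. -/
def lowEdgeSet (ι J : Type*) [Fintype ι] [DecidableEq ι] [Fintype J] [DecidableEq J] (c : ℝ) :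
    Set (Matrix (ι × J) (ι × J) ℂ) :=
  {x | ¬ (reduction x - (c : ℂ) • (1 : Matrix (ι × J) (ι × J) ℂ)).PosSemidef}

lemma measurableSet_lowEdgeSet (ι J : Type*) [Fintype ι] [DecidableEq ι] [Fintype J]
    [DecidableEq J] (c : ℝ) : MeasurableSet (lowEdgeSet ι J c) := by
  have h : IsClosed ((fun x : Matrix (ι × J) (ι × J) ℂ => reduction x - (c : ℂ) • 1) ⁻¹'
      {x | x.PosSemidef}) :=
    isClosed_setOf_posSemidef.preimage (continuous_reduction.sub continuous_const)
  exact h.measurableSet.compl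

lemma measureReal_goodMat_lowEdge_le {Ω : Type*} [MeasurableSpace Ω] (ℙ : Measure Ω)
    [IsProbabilityMeasure ℙ] {ι J : Type*} [Fintype ι] [DecidableEq ι] [Fintype J] [DecidableEq J]
    [Nonempty ι] [Nonempty J] {Y : Ω → Matrix (ι × J) (ι × J) ℂ} (hY : Measurable Y)
    (hU : ∀ U ∈ unitary (Matrix (ι × J) (ι × J) ℂ),
      ℙ.map (fun ω => U * Y ω * star U) = ℙ.map Y)
    {A' r m' m'' s t δ K : ℝ} (ht : 0 < t) (hs : 0 ≤ s)
    (ha : 0 ≤ m'' - A') (hw : 0 ≤ m'' - A' + t - t⁻¹ * s) (hδ : 0 < δ) {q : ℕ}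
    (hK : ((Fintype.card ι : ℝ) ^ 2 + 1) * Fintype.card ι * r + 1 ≤ K)
    (hKz : redEdge (Fintype.card ι) A' m' m'' s t ≤ K)
    (hq : errConst' (Fintype.card ι) r (m'' - A') s t * energyConst (Fintype.card ι) r * q ^ 2 *
      Fintype.card ι ≤ δ * Fintype.card J) :
    δ * (K - redEdge (Fintype.card ι) A' m' m'' s t + δ + δ) ^ (2 * q) *
      ℙ.real {ω | Y ω ∈ lowEdgeSet ι J (redEdge (Fintype.card ι) A' m' m'' s t - 2 * δ) ∧
        GoodMat A' r m' m'' s (Y ω)} ≤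
      Fintype.card (ι × J) * (K - redEdge (Fintype.card ι) A' m' m'' s t + δ) ^ (2 * q + 1) := by
  have hm : MeasurableSet {x : Matrix (ι × J) (ι × J) ℂ | GoodMat A' r m' m'' s x} :=
    (isClosed_setOf_goodMat A' r m' m'' s).measurableSet
  have hP : IsProbabilityMeasure (ℙ.map Y) := Measure.isProbabilityMeasure_map hY.aemeasurable
  have hinv : ∀ U ∈ unitary (Matrix (ι × J) (ι × J) ℂ),
      (ℙ.map Y).map (fun x => U * x * star U) = ℙ.map Y := by
    intro U hU'
    have hf : Measurable fun x : Matrix (ι × J) (ι × J) ℂ => U * x * star U :=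
      Continuous.measurable (by fun_prop)
    rw [Measure.map_map hf hY]
    exact hU U hU'
  have h := invMeasure_restrict hinv A' r m' m'' s
  have h1 := h.measureReal_not_posSemidef_le
    (by
      rw [measureReal_restrict_apply_univ]
      exact measureReal_le_one)
    (ae_restrict_mem hm) ht hs ha hw hδ hK hKz hq
  have h2 : ((ℙ.map Y).restrict {x | GoodMat A' r m' m'' s x}).real
      (lowEdgeSet ι J (redEdge (Fintype.card ι) A' m' m'' s t - 2 * δ)) =
      ℙ.real {ω | Y ω ∈ lowEdgeSet ι J (redEdge (Fintype.card ι) A' m' m'' s t - 2 * δ) ∧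
        GoodMat A' r m' m'' s (Y ω)} := by
    rw [measureReal_restrict_apply (measurableSet_lowEdgeSet ι J _),
      map_measureReal_apply hY ((measurableSet_lowEdgeSet ι J _).inter hm)]
    rfl
  rw [← h2]
  exact h1

lemma pow_log_le {ρ : ℝ} {C : ℕ} (hρ0 : 0 ≤ ρ) (hρ : ρ ^ (2 * C) ≤ 8⁻¹) {d : ℕ} (hd : 0 < d) :
    ρ ^ (2 * (C * Nat.log 2 d)) ≤ 8 / (d : ℝ) ^ 3 := by
  have hd' : (0 : ℝ) < d := by exact_mod_cast hd
  have h1 : (d : ℝ) ≤ 2 ^ (Nat.log 2 d + 1) := by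
    exact_mod_cast (Nat.lt_pow_succ_log_self (by norm_num) d).le
  have h2 : (d : ℝ) ^ 3 ≤ 8 * 8 ^ Nat.log 2 d := by
    calc (d : ℝ) ^ 3 ≤ (2 ^ (Nat.log 2 d + 1)) ^ 3 := by gcongr
      _ = (2 ^ 3) ^ (Nat.log 2 d + 1) := by rw [← pow_mul, ← pow_mul, mul_comm]
      _ = 8 * 8 ^ Nat.log 2 d := by rw [pow_succ]; norm_num; ring
  calc ρ ^ (2 * (C * Nat.log 2 d)) = (ρ ^ (2 * C)) ^ Nat.log 2 d := by
        rw [← mul_assoc, pow_mul]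
    _ ≤ (8⁻¹) ^ Nat.log 2 d := by gcongr
    _ = 1 / 8 ^ Nat.log 2 d := by rw [inv_pow, one_div]
    _ ≤ 8 / (d : ℝ) ^ 3 := by
        rw [div_le_div_iff₀ (by positivity) (by positivity)]
        linarith

lemma eventually_mul_log_sq_le (c : ℝ) {δ : ℝ} (hδ : 0 < δ) :
    ∀ᶠ d : ℕ in atTop, c * (Nat.log 2 d : ℝ) ^ 2 ≤ δ * d := by
  have h := (Real.isLittleO_pow_log_id_atTop (n := 2)).comp_tendsto tendsto_natCast_atTop_atTop
  have hl : 0 < Real.log 2 := Real.log_pos (by norm_num)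
  have hc : 0 < δ * Real.log 2 ^ 2 / (|c| + 1) := by positivity
  filter_upwards [h.bound hc, eventually_ge_atTop 1] with d hd hd1
  have hd1' : (1 : ℝ) ≤ d := by exact_mod_cast hd1
  have h1 : (Nat.log 2 d : ℝ) * Real.log 2 ≤ Real.log d := by
    rw [← Real.log_pow]
    refine Real.log_le_log (by positivity) ?_
    exact_mod_cast Nat.pow_log_le_self 2 (by omega)
  simp only [Function.comp, id, norm_pow, Real.norm_eq_abs, abs_of_nonneg (Real.log_nonneg hd1'),
    Nat.abs_cast] at hd
  have h2 : ((Nat.log 2 d : ℝ) * Real.log 2) ^ 2 ≤ Real.log d ^ 2 := by gcongr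
  have h3 : (|c| + 1) * ((Nat.log 2 d : ℝ) * Real.log 2) ^ 2 ≤ δ * Real.log 2 ^ 2 * d := by
    calc _ ≤ (|c| + 1) * (δ * Real.log 2 ^ 2 / (|c| + 1) * d) := by
          gcongr; exact h2.trans hd
      _ = _ := by field_simp
  have h4 : (|c| + 1) * (Nat.log 2 d : ℝ) ^ 2 ≤ δ * d := by
    rw [mul_pow] at h3
    refine le_of_mul_le_mul_right ?_ (by positivity : 0 < Real.log 2 ^ 2)
    linarith
  refine le_trans (mul_le_mul_of_nonneg_right ?_ (sq_nonneg _)) h4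
  linarith [le_abs_self c]

lemma ae_eventually_not_lowEdge {Ω : Type*} [MeasurableSpace Ω] (ℙ : Measure Ω)
    [IsProbabilityMeasure ℙ] {n : ℕ} (hn : 0 < n)
    {X : (d : ℕ) → Ω → Matrix (Fin n × Fin d) (Fin n × Fin d) ℂ} (hX : ∀ d, Measurable (X d))
    (hU : UnitInv ℙ n X) {A' r m' m'' s t δ : ℝ} (ht : 0 < t) (hs : 0 ≤ s)
    (ha : 0 ≤ m'' - A') (hw : 0 ≤ m'' - A' + t - t⁻¹ * s) (hδ : 0 < δ) :
    ∀ᵐ ω ∂ℙ, ∀ᶠ d in atTop, GoodMat A' r m' m'' s (X d ω) →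
      X d ω ∉ lowEdgeSet (Fin n) (Fin d) (redEdge n A' m' m'' s t - 2 * δ) := by
  have : NeZero n := ⟨hn.ne'⟩
  set z := redEdge n A' m' m'' s t with hz
  set K := max (((n : ℝ) ^ 2 + 1) * n * r + 1) z with hK
  set v := K - z + δ with hv
  have hv0 : 0 < v := by linarith [le_max_right (((n : ℝ) ^ 2 + 1) * n * r + 1) z]
  set ρ := v / (v + δ) with hρ
  have hρ0 : 0 ≤ ρ := by positivity
  have hρ1 : ρ < 1 := by rw [hρ, div_lt_one (by linarith)]; linarith
  obtain ⟨C, hC⟩ : ∃ C : ℕ, ρ ^ (2 * C) ≤ 8⁻¹ := by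
    obtain ⟨C, hC⟩ := exists_pow_lt_of_lt_one (show (0 : ℝ) < 8⁻¹ by norm_num) hρ1
    exact ⟨C, (pow_le_pow_of_le_one hρ0 hρ1.le (by omega)).trans hC.le⟩
  set E : ℕ → Set Ω := fun d => {ω | X d ω ∈ lowEdgeSet (Fin n) (Fin d) (z - 2 * δ) ∧
    GoodMat A' r m' m'' s (X d ω)} with hE
  have hbound : ∀ᶠ d : ℕ in atTop, ℙ.real (E d) ≤ (8 * n * v / δ) * (1 / (d : ℝ) ^ 2) := by
    filter_upwards [eventually_gt_atTop 0, eventually_mul_log_sq_le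
      (errConst' n r (m'' - A') s t * energyConst n r * C ^ 2 * n) hδ] with d hd hd2
    have : NeZero d := ⟨hd.ne'⟩
    have hd' : (0 : ℝ) < d := by exact_mod_cast hd
    have h1 := measureReal_goodMat_lowEdge_le ℙ (hX d) (hU d) (A' := A') (r := r) (m' := m')
      (m'' := m'') (s := s) (δ := δ) (K := K) (q := C * Nat.log 2 d) ht hs ha hw hδ
      (by simpa only [Fintype.card_fin] using le_max_left _ _)
      (by simpa only [Fintype.card_fin] using le_max_right _ _)
      (by
        simp only [Fintype.card_fin]
        push_cast
        rw [mul_pow]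
        linarith)
    simp only [Fintype.card_prod, Fintype.card_fin] at h1
    push_cast at h1
    change δ * (v + δ) ^ (2 * (C * Nat.log 2 d)) * ℙ.real (E d) ≤
      n * d * v ^ (2 * (C * Nat.log 2 d) + 1) at h1
    have h2 := pow_log_le hρ0 hC hd
    rw [hρ, div_pow] at h2
    have hp : 0 < (v + δ) ^ (2 * (C * Nat.log 2 d)) := by positivity
    have h3 : ℙ.real (E d) ≤ n * d * v / δ *
        (v ^ (2 * (C * Nat.log 2 d)) / (v + δ) ^ (2 * (C * Nat.log 2 d))) := by
      rw [div_mul_div_comm, le_div_iff₀ (by positivity), mul_comm]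
      refine h1.trans (le_of_eq ?_)
      rw [pow_succ]
      ring
    calc _ ≤ _ := h3
      _ ≤ n * d * v / δ * (8 / (d : ℝ) ^ 3) := by gcongr
      _ = _ := by field_simp
  have hsum : Summable fun d => ℙ.real (E d) := by
    refine Summable.of_norm_bounded_eventually_nat
      ((Real.summable_one_div_nat_pow.mpr one_lt_two).mul_left (8 * n * v / δ)) ?_
    filter_upwards [hbound] with d hd
    rwa [Real.norm_of_nonneg measureReal_nonneg]
  have hsum' : ∑' d, ℙ (E d) ≠ ⊤ := by
    have : ∀ d, ℙ (E d) = ENNReal.ofReal (ℙ.real (E d)) := fun d =>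
      (ofReal_measureReal (measure_ne_top _ _)).symm
    simp only [this]
    exact hsum.tsum_ofReal_ne_top
  filter_upwards [ae_eventually_notMem hsum'] with ω hω
  filter_upwards [hω] with d hd hgood hbad
  exact hd ⟨hbad, hgood⟩

end Assembly

section StrongLimit

set_option linter.unusedSectionVars false

open scoped Matrix.Norms.L2Operator

lemma ae_mem_msupport (μ : Measure ℝ) : ∀ᵐ x ∂μ, x ∈ msupport μ := by
  refine measure_null_of_locally_null _ fun x hx => ?_
  simp only [Set.mem_compl_iff, Set.mem_ofPred_eq, msupport] at hx
  push Not at hx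
  obtain ⟨U, hU, hxU, h0⟩ := hx
  exact ⟨U, mem_nhdsWithin_of_mem_nhds (hU.mem_nhds hxU), le_antisymm h0 bot_le⟩

lemma le_integral_of_msupport {μ : Measure ℝ} [IsProbabilityMeasure μ] {A B : ℝ}
    (h : msupport μ ⊆ Set.Icc A B) : A ≤ B ∧ A ≤ ∫ x, x ∂μ := by
  have hae : ∀ᵐ x ∂μ, x ∈ Set.Icc A B := (ae_mem_msupport μ).mono fun x hx => h hx
  have hInt : Integrable (fun x : ℝ => x) μ := by
    refine Integrable.of_bound (by fun_prop) (max |A| |B|) ?_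
    filter_upwards [hae] with x hx using abs_le_max_abs_abs hx.1 hx.2
  obtain ⟨x, hx⟩ := hae.exists
  refine ⟨hx.1.trans hx.2, ?_⟩
  have := integral_mono_ae (integrable_const A) hInt (hae.mono fun x hx => hx.1)
  simpa using this

variable {I : Type*} [Fintype I] [DecidableEq I]

lemma opNorm_eq_norm (x : Matrix I I ℂ) : opNorm x = ‖x‖ := rfl

lemma polyApply_X (x : Matrix I I ℂ) : polyApply X x = x := by simp [polyApply]

lemma polyApply_X_sq (x : Matrix I I ℂ) : polyApply (X ^ 2) x = x * x := by
  simp [polyApply, sq]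

lemma polyApply_C_sub_X (b : ℝ) (x : Matrix I I ℂ) :
    polyApply (C b - X) x = (b : ℂ) • 1 - x := by
  simp [polyApply, Algebra.algebraMap_eq_smul_one]

lemma ntr_centered_sq [Nonempty I] (x : Matrix I I ℂ) :
    ntr ((x - ntr x • 1) * (x - ntr x • 1)) = ntr (x * x) - ntr x ^ 2 := by
  have hc : (Fintype.card I : ℂ) ≠ 0 := by exact_mod_cast Fintype.card_ne_zero
  have h1 : x.trace = Fintype.card I * ntr x := by rw [ntr, mul_inv_cancel_left₀ hc]
  have h2 : (x - ntr x • 1) * (x - ntr x • 1) = x * x - (2 * ntr x) • x + (ntr x ^ 2) • 1 := by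
    simp only [sub_mul, mul_sub, smul_mul_assoc, mul_smul_comm, one_mul, mul_one,
      smul_sub, two_mul, add_smul, sq, mul_smul]
    abel
  rw [h2]
  simp only [ntr, Matrix.trace_add, Matrix.trace_sub, Matrix.trace_smul, Matrix.trace_one,
    smul_eq_mul]
  field_simp
  ring

lemma StrongConv.ae_eventually_goodMat {Ω : Type*} [MeasurableSpace Ω] {ℙ : Measure Ω} {n : ℕ}
    (hn : 0 < n) {X : (d : ℕ) → Ω → Matrix (Fin n × Fin d) (Fin n × Fin d) ℂ}
    (hpsd : ∀ d ω, (X d ω).PosSemidef) {μ : Measure ℝ} (h : StrongConv ℙ n X μ)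
    {A B m σ ε s : ℝ} (hA : 0 ≤ A) (hAB : A ≤ B) (hε : 0 < ε)
    (hsupp : msupport μ ⊆ Set.Icc A B) (hmean : (∫ x, x ∂μ) = m)
    (hvar : (∫ x, x ^ 2 ∂μ) - m ^ 2 = σ ^ 2) (hs : σ ^ 2 < s) :
    ∀ᵐ ω ∂ℙ, ∀ᶠ d in atTop, GoodMat (A - ε) (B + ε) (m - ε) (m + ε) s (X d ω) := by
  have : NeZero n := ⟨hn.ne'⟩
  filter_upwards [h] with ω hω
  have hntr : ∀ (d : ℕ) (y : Matrix (Fin n × Fin d) (Fin n × Fin d) ℂ),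
      ((n : ℂ) * (d : ℂ))⁻¹ * y.trace = ntr y := by
    intro d y
    rw [ntr, Fintype.card_prod, Fintype.card_fin, Fintype.card_fin]
    push_cast
    rfl
  obtain ⟨ht1, hn1⟩ := hω Polynomial.X
  obtain ⟨ht2, -⟩ := hω (Polynomial.X ^ 2)
  obtain ⟨-, hn3⟩ := hω (Polynomial.C B - Polynomial.X)
  simp only [polyApply_X, polyApply_X_sq, polyApply_C_sub_X, hntr, opNorm_eq_norm, eval_X, eval_pow,
    eval_sub, eval_C, hmean] at ht1 hn1 ht2 hn3
  have hB1 : sSup ((fun x : ℝ => |x|) '' msupport μ) ≤ B := by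
    refine Real.sSup_le ?_ (hA.trans hAB)
    rintro _ ⟨x, hx, rfl⟩
    obtain ⟨h1, h2⟩ := hsupp hx
    simpa only [abs_of_nonneg (hA.trans h1)] using h2
  have hB3 : sSup ((fun x : ℝ => |B - x|) '' msupport μ) ≤ B - A := by
    refine Real.sSup_le ?_ (by linarith)
    rintro _ ⟨x, hx, rfl⟩
    obtain ⟨h1, h2⟩ := hsupp hx
    simp only
    rw [abs_of_nonneg (by linarith)]
    linarith
  have hre : Tendsto (fun d => (ntr (X d ω)).re) atTop (𝓝 m) := by
    simpa [Function.comp_def] using (Complex.continuous_re.tendsto _).comp ht1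
  have hvr : Tendsto (fun d => (ntr (X d ω * X d ω) - ntr (X d ω) ^ 2).re) atTop (𝓝 (σ ^ 2)) := by
    have := (Complex.continuous_re.tendsto _).comp (ht2.sub (ht1.pow 2))
    rwa [← Complex.ofReal_pow, ← Complex.ofReal_sub, Complex.ofReal_re, hvar] at this
  filter_upwards [hn1.eventually_lt_const (show _ < B + ε by linarith),
    hn3.eventually_lt_const (show _ < B - A + ε by linarith),
    hre.eventually_const_lt (show m - ε < m by linarith),
    hre.eventually_lt_const (show m < m + ε by linarith),
    hvr.eventually_lt_const hs, eventually_gt_atTop 0] with d h1 h2 h3 h4 h5 hd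
  have : NeZero d := ⟨hd.ne'⟩
  have hherm := (hpsd d ω).isHermitian
  refine ⟨hherm, h1.le, ?_, h3.le, h4.le, ?_⟩
  · have h6 := posSemidef_smul_one_sub ((isHermitian_real_smul_one B).sub hherm) h2.le
    convert h6 using 1
    push_cast
    simp only [sub_smul, add_smul]
    abel
  · rw [ntr_centered_sq]
    exact h5.le

lemma mem_SEP_of_not_mem_lowEdgeSet {n d : ℕ} (hn : 2 ≤ n)
    {x : Matrix (Fin n × Fin d) (Fin n × Fin d) ℂ} {r c : ℝ} (hx : x.IsHermitian) (hr : ‖x‖ ≤ r)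
    (hc : ((n : ℝ) ^ 2 - 2) * r ≤ c) (hlow : x ∉ lowEdgeSet (Fin n) (Fin d) c) : x ∈ SEP n d := by
  have hn' : (2 : ℝ) ≤ n := by exact_mod_cast hn
  refine mem_SEP_of_posSemidef hn ?_
  have h1 : (reduction x - (c : ℂ) • (1 : Matrix (Fin n × Fin d) (Fin n × Fin d) ℂ)).PosSemidef :=
    not_not.mp hlow
  have h2 := (posSemidef_smul_one_sub hx hr).smul
    (Complex.zero_le_real.mpr (show (0 : ℝ) ≤ (n : ℝ) ^ 2 - 2 by nlinarith))
  have h3 := (Matrix.PosSemidef.one (n := Fin n × Fin d) (R := ℂ)).smul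
    (Complex.zero_le_real.mpr (sub_nonneg.mpr hc))
  convert (h1.add h2).add h3 using 1
  push_cast
  simp only [smul_sub, sub_smul, mul_smul]
  abel

lemma tendsto_measure_of_ae_eventually {Ω : Type*} [MeasurableSpace Ω] (ℙ : Measure Ω)
    [IsProbabilityMeasure ℙ] {E : ℕ → Set Ω} (h : ∀ᵐ ω ∂ℙ, ∀ᶠ d in atTop, ω ∈ E d) :
    Tendsto (fun d => ℙ (E d)) atTop (𝓝 1) := by
  have hmono : Monotone fun D : ℕ => ⋂ d ≥ D, E d := fun a b hab =>
    Set.biInter_subset_biInter_left fun d hd => le_trans hab hd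
  have h1 := tendsto_measure_iUnion_atTop (μ := ℙ) hmono
  have h2 : ℙ (⋃ D : ℕ, ⋂ d ≥ D, E d) = 1 := by
    rw [← measure_univ (μ := ℙ)]
    refine measure_congr (eventuallyEq_univ.mpr ?_)
    filter_upwards [h] with ω hω
    obtain ⟨D, hD⟩ := eventually_atTop.mp hω
    exact Set.mem_iUnion.mpr ⟨D, Set.mem_iInter₂.mpr hD⟩
  rw [h2] at h1
  refine tendsto_of_tendsto_of_tendsto_of_le_of_le h1 tendsto_const_nhds (fun d => ?_)
    fun d => prob_le_one
  exact measure_mono (Set.biInter_subset_of_mem (le_refl d))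

end StrongLimit

/-- If `A > (n²−2)(B−m) + 2σ√(n²−2)`, a unitarily invariant
strongly convergent sequence of random PSD matrices is asymptotically separable. -/
theorem stmt2
    {Ω : Type*} [MeasurableSpace Ω] (ℙ : Measure Ω) [IsProbabilityMeasure ℙ]
    (n : ℕ) (hn : 2 ≤ n)
    (X : (d : ℕ) → Ω → Matrix (Fin n × Fin d) (Fin n × Fin d) ℂ)
    (hmeas : ∀ d, Measurable (X d))
    (hpsd : ∀ d ω, (X d ω).PosSemidef)
    (hUI : UnitInv ℙ n X)
    (μ : Measure ℝ) [IsProbabilityMeasure μ]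
    (A B m σ : ℝ) (hA : 0 ≤ A) (hσ : 0 ≤ σ)
    (hsupp : msupport μ ⊆ Set.Icc A B)
    (hmean : (∫ x, x ∂μ) = m)
    (hvar : (∫ x, x ^ 2 ∂μ) - m ^ 2 = σ ^ 2)
    (hconv : StrongConv ℙ n X μ)
    (hcond : A > ((n : ℝ) ^ 2 - 2) * (B - m) + 2 * σ * Real.sqrt ((n : ℝ) ^ 2 - 2)) :
    (∀ᵐ ω ∂ℙ, ∀ᶠ d : ℕ in atTop, X d ω ∈ SEP n d) ∧
      Tendsto (fun d : ℕ => ℙ {ω | X d ω ∈ SEP n d}) atTop (𝓝 1) := by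
  suffices h : ∀ᵐ ω ∂ℙ, ∀ᶠ d : ℕ in atTop, X d ω ∈ SEP n d from
    ⟨h, tendsto_measure_of_ae_eventually ℙ h⟩
  obtain ⟨hAB, hAm⟩ := le_integral_of_msupport hsupp
  rw [hmean] at hAm
  have hn' : (2 : ℝ) ≤ n := by exact_mod_cast hn
  set w := Real.sqrt ((n : ℝ) ^ 2 - 2) with hw
  have hw2 : (n : ℝ) ^ 2 - 2 = w ^ 2 := (Real.sq_sqrt (by nlinarith)).symm
  have hw1 : 1 ≤ w := by
    rw [hw]
    exact Real.one_le_sqrt.mpr (by nlinarith)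
  obtain ⟨ε, hε, hgap⟩ : ∃ ε : ℝ, 0 < ε ∧
      ε * (2 * w ^ 2 + 2 * w + 5) = A - (w ^ 2 * (B - m) + 2 * σ * w) := by
    have hpos : 0 < 2 * w ^ 2 + 2 * w + 5 := by positivity
    refine ⟨(A - (w ^ 2 * (B - m) + 2 * σ * w)) / (2 * w ^ 2 + 2 * w + 5), div_pos ?_ hpos,
      div_mul_cancel₀ _ hpos.ne'⟩
    rw [hw2] at hcond
    linarith
  have hτ : 0 < σ + ε := by linarith
  have ht : 0 < (σ + ε) * w := by positivity
  have hst : ((σ + ε) * w)⁻¹ * (σ + ε) ^ 2 = (σ + ε) / w := by field_simp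
  have hle : (σ + ε) / w ≤ (σ + ε) * w := by
    rw [div_le_iff₀ (by linarith)]
    nlinarith [mul_nonneg hτ.le (sub_nonneg.mpr hw1), mul_nonneg ht.le (sub_nonneg.mpr hw1)]
  have hedge : ((n : ℝ) ^ 2 - 2) * (B + ε) ≤
      redEdge n (A - ε) (m - ε) (m + ε) ((σ + ε) ^ 2) ((σ + ε) * w) - 2 * ε := by
    have h1 : w ^ 2 * ((σ + ε) / w) = (σ + ε) * w := by field_simp
    rw [redEdge, hst, hw2, h1, show (n : ℝ) ^ 2 - 1 = w ^ 2 + 1 by linarith]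
    linarith
  have hgood := hconv.ae_eventually_goodMat (by omega) hpsd hA hAB hε hsupp hmean hvar
    (show σ ^ 2 < (σ + ε) ^ 2 by nlinarith)
  have hlow := ae_eventually_not_lowEdge ℙ (by omega) hmeas hUI (A' := A - ε) (r := B + ε)
    (m' := m - ε) (m'' := m + ε) ht (sq_nonneg (σ + ε)) (by linarith) (by rw [hst]; linarith) hε
  filter_upwards [hgood, hlow] with ω h1 h2
  filter_upwards [h1, h2] with d hd1 hd2
  exact mem_SEP_of_not_mem_lowEdgeSet hn hd1.herm hd1.bdd hedge (hd2 hd1)
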